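/- Let Ω ⊂ ℝ² be a compact convex set of positive measure, let D = [−1,1]² ⊂ ℝ², and let Q ⊂ (0,∞) be a uniformly discrete set. Then the union of dilated square boundaries P = Q∂D is a sampling set for B_Ω if and only if (d⁻(Q), 0) ∉ Ω − Ω and (0, d⁻(Q)) ∉ Ω − Ω. -/

import Mathlib

open MeasureTheory FourierTransform Filter Metric
open scoped Pointwise RealInnerProductSpace ENNReal NNReal

noncomputable section

variable {V : Type*} [NormedAddCommGroup V] [InnerProductSpace ℝ V]
  [FiniteDimensional ℝ V] [MeasurableSpace V] [BorelSpace V]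

/-- `f` belongs to the Bernstein space `B_Ω`: it is a continuous bounded function which is the
inverse Fourier transform of a tempered distribution supported in `Ω`, i.e. its distributional
Fourier transform annihilates every test function whose support is disjoint from `Ω`. -/
def MemBernstein (Ω : Set V) (f : V → ℂ) : Prop :=
  Continuous f ∧ (∃ C, ∀ x, ‖f x‖ ≤ C) ∧
    ∀ ψ : V → ℂ, ContDiff ℝ (⊤ : ℕ∞) ψ → HasCompactSupport ψ → tsupport ψ ∩ Ω = ∅ →
      ∫ x, f x * 𝓕 ψ x = 0

/-- `P` is a sampling set for the Bernstein space `B_Ω`: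
`‖f‖_∞ ≤ C · sup_{x ∈ P} ‖f x‖` for all `f ∈ B_Ω`. -/
def IsSamplingSet (Ω P : Set V) : Prop :=
  ∃ C > 0, ∀ f : V → ℂ, MemBernstein Ω f →
    ∀ x : V, ‖f x‖ ≤ C * sSup ((fun p => ‖f p‖) '' P)

/-- A set is uniformly discrete if distinct points are separated by a fixed positive distance. -/
def UniformlyDiscrete {X : Type*} [PseudoMetricSpace X] (Λ : Set X) : Prop :=
  ∃ δ > 0, ∀ x ∈ Λ, ∀ y ∈ Λ, x ≠ y → δ ≤ dist x y

/-- The lower uniform (Beurling) density of a set: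
`D⁻(Λ) = lim_{r→∞} inf_x #(Λ ∩ B_r(x)) / |B_r(x)|`. -/
def lowerUniformDensity {X : Type*} [NormedAddCommGroup X] [MeasureSpace X] (Λ : Set X) : ℝ :=
  liminf (fun r : ℝ => ⨅ x : X,
    (Nat.card ↥(Λ ∩ closedBall x r) : ℝ) / (volume (closedBall x r)).toReal) atTop

set_option linter.unusedSectionVars false

lemma log_factorial_le {n : ℕ} (hn : 1 ≤ n) :
    Real.log n.factorial ≤ n * Real.log n - n + 1 + Real.log n := by
  induction n, hn using Nat.le_induction with
  | base => simp
  | succ n hn ih =>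
    have hn' : (0 : ℝ) < n := by exact_mod_cast hn
    have h1 : (1 : ℝ) - ((n + 1) / n : ℝ)⁻¹ ≤ Real.log ((n + 1) / n : ℝ) :=
      Real.one_sub_inv_le_log_of_pos (by positivity)
    rw [Real.log_div (by positivity) (by positivity)] at h1
    have h2 : ((n : ℝ) + 1) * (1 - ((n + 1) / n : ℝ)⁻¹) = 1 := by field_simp; ring
    have h3 := mul_le_mul_of_nonneg_left h1 (by positivity : (0 : ℝ) ≤ (n : ℝ) + 1)
    rw [Nat.factorial_succ, Nat.cast_mul, Real.log_mul (by positivity) (by positivity)]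
    push_cast at *
    nlinarith

lemma sub_two_log_le_sum_log_div (K : ℕ) :
    (K : ℝ) - 2 * Real.log (K + 1) ≤
      ∑ k ∈ Finset.range K, Real.log ((K + 1 : ℝ) / (k + 2)) := by
  have h1 : ∀ n : ℕ, ∑ k ∈ Finset.range n, Real.log (k + 2 : ℝ) =
      Real.log ((n + 1).factorial : ℝ) := by
    intro n
    induction n with
    | zero => simp
    | succ n ih =>
      rw [Finset.sum_range_succ, ih, Nat.factorial_succ (n + 1), Nat.cast_mul,
        Real.log_mul (by positivity) (by positivity), add_comm]
      congr 2
      push_cast; ring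
  have h2 : ∀ k ∈ Finset.range K, Real.log ((K + 1 : ℝ) / (k + 2)) =
      Real.log (K + 1) - Real.log (k + 2) := fun k _ =>
    Real.log_div (by positivity) (by positivity)
  rw [Finset.sum_congr rfl h2, Finset.sum_sub_distrib, h1]
  have h3 := log_factorial_le (n := K + 1) (by omega)
  push_cast at h3
  simp only [Finset.sum_const, Finset.card_range, nsmul_eq_mul]
  linarith

lemma circleAverage_mul_abs_im (a : ℝ) {R : ℝ} (hR : 0 ≤ R) :
    Real.circleAverage (fun z : ℂ => a * |z.im|) 0 R = 2 * a * R / Real.pi := by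
  rw [Real.circleAverage_def]
  have h0 : ∀ θ : ℝ, a * |(circleMap 0 R θ).im| = (a * R) * |Real.sin θ| := by
    intro θ
    simp [circleMap_zero, Complex.exp_mul_I, ← Complex.ofReal_sin, ← Complex.ofReal_cos,
      abs_mul, abs_of_nonneg hR]
    ring
  simp only [h0]
  rw [intervalIntegral.integral_const_mul]
  have hc : Continuous fun θ : ℝ => |Real.sin θ| := by fun_prop
  have h1 : ∫ θ in (0 : ℝ)..Real.pi, |Real.sin θ| = 2 := by
    rw [intervalIntegral.integral_congr (g := Real.sin)]
    · simp; norm_num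
    · intro θ hθ
      rw [Set.uIcc_of_le Real.pi_pos.le] at hθ
      exact abs_of_nonneg (Real.sin_nonneg_of_mem_Icc hθ)
  have h2 : ∫ θ in Real.pi..(2 * Real.pi), |Real.sin θ| = 2 := by
    have := intervalIntegral.integral_comp_add_right (fun θ => |Real.sin θ|) Real.pi
      (a := 0) (b := Real.pi)
    simp only [Real.sin_add_pi, abs_neg, zero_add, ← two_mul] at this
    rw [← this, h1]
  rw [← intervalIntegral.integral_add_adjacent_intervals (hc.intervalIntegrable 0 Real.pi)
    (hc.intervalIntegrable _ _), h1, h2]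
  simp
  field_simp
  ring

lemma sum_log_le_circleAverage {F : ℂ → ℂ} (hF : Differentiable ℂ F) (h0 : F 0 ≠ 0)
    {R : ℝ} (hR : 0 < R) (Z : Finset ℂ) (hZ : ∀ z ∈ Z, F z = 0 ∧ ‖z‖ ≤ R) :
    ∑ z ∈ Z, Real.log (R / ‖z‖) + Real.log ‖F 0‖ ≤
      Real.circleAverage (fun z => Real.log ‖F z‖) 0 R := by
  have hA : AnalyticOnNhd ℂ F (closedBall 0 |R|) := fun z _ => hF.analyticAt z
  rw [AnalyticOnNhd.circleAverage_log_norm hR.ne' hA h0]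
  gcongr
  simp only [zero_sub, norm_neg, ← div_eq_mul_inv]
  have hfin := (MeromorphicOn.divisor F (closedBall 0 |R|)).finiteSupport
    (isCompact_closedBall 0 |R|)
  classical
  rw [finsum_eq_sum_of_support_subset (s := hfin.toFinset ∪ Z)]
  · calc ∑ z ∈ Z, Real.log (R / ‖z‖)
        ≤ ∑ z ∈ Z, (MeromorphicOn.divisor F (closedBall 0 |R|) z : ℝ) * Real.log (R / ‖z‖) := by
          refine Finset.sum_le_sum fun z hz => ?_
          obtain ⟨hz0, hzR⟩ := hZ z hz
          have hzne : z ≠ 0 := fun h => h0 (h ▸ hz0)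
          have hlog : 0 ≤ Real.log (R / ‖z‖) :=
            Real.log_nonneg (by rw [le_div_iff₀ (norm_pos_iff.2 hzne)]; linarith)
          refine le_mul_of_one_le_left hlog ?_
          have hzm : z ∈ closedBall (0 : ℂ) |R| := by
            simpa using hzR.trans (le_abs_self R)
          rw [MeromorphicOn.AnalyticOnNhd.divisor_apply hA hzm]
          have hne : analyticOrderAt F z ≠ 0 := by
            rw [(hF.analyticAt z).analyticOrderAt_ne_zero]; exact hz0
          have htop : analyticOrderAt F z ≠ ⊤ := by
            intro ht
            rw [analyticOrderAt_eq_top] at ht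
            have := AnalyticOnNhd.eq_of_eventuallyEq (f := F) (g := 0)
              (fun z _ => hF.analyticAt z) (fun z _ => analyticAt_const) (z₀ := z) ht
            exact h0 (by simp [this])
          generalize analyticOrderAt F z = k at hne htop
          lift k to ℕ using htop
          have h1 : 1 ≤ k := Nat.one_le_iff_ne_zero.2 (by exact_mod_cast hne)
          simpa using h1
      _ ≤ _ := by
          refine Finset.sum_le_sum_of_subset_of_nonneg Finset.subset_union_right ?_
          intro z hz hz'
          have hz1 : z ∈ hfin.toFinset := by
            rcases Finset.mem_union.1 hz with h | h
            exacts [h, absurd h hz']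
          have hzm : z ∈ closedBall (0 : ℂ) |R| :=
            (MeromorphicOn.divisor F (closedBall 0 |R|)).supportWithinDomain
              (by simpa using hz1)
          have hzR : ‖z‖ ≤ R := by simpa [abs_of_pos hR] using hzm
          rcases eq_or_ne z 0 with rfl | hzne
          · simp
          · refine mul_nonneg ?_ (Real.log_nonneg
              (by rw [le_div_iff₀ (norm_pos_iff.2 hzne)]; linarith))
            exact_mod_cast MeromorphicOn.AnalyticOnNhd.divisor_nonneg hA z
  · intro z hz
    simp only [Function.mem_support, ne_eq, mul_eq_zero, not_or] at hz
    simp only [Finset.coe_union, Set.mem_union, Finset.mem_coe]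
    left
    simpa using hz.1

/-- An entire function of exponential type `πτ` in the imaginary direction and polynomial growth
along the real axis vanishes at the origin as soon as its real zeros have density above `τ`. -/
lemma apply_zero_eq_zero_of_dense_zeros {F : ℂ → ℂ} (hF : Differentiable ℂ F)
    {C τ b r : ℝ} {M m : ℕ} (hτ : 0 < τ) (hr : 0 < r) (hb : 2 * r < b) (hm : τ * b < m)
    (hgrow : ∀ z, ‖F z‖ ≤ C * (1 + ‖z‖) ^ M * Real.exp (Real.pi * τ * |z.im|))
    {S : Set ℝ} (hS : ∀ x ∈ S, F x = 0)
    (hbins : ∀ c : ℝ, ∃ T : Finset ℝ, T.card = m ∧ ↑T ⊆ S ∩ Set.Icc (c - r) (c + r)) :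
    F 0 = 0 := by
  by_contra h0
  have hb0 : 0 < b := by linarith
  choose T hTc hTS using hbins
  have hC : 0 < C := by
    have := hgrow 0
    simp only [norm_zero, add_zero, one_pow, mul_one, Complex.zero_im, abs_zero, mul_zero,
      Real.exp_zero] at this
    exact (norm_pos_iff.2 h0).trans_le this
  set C' := max C 1 with hC'
  have hC'1 : 1 ≤ C' := le_max_right _ _
  have key : ∀ K : ℕ, 2 * m * ((K : ℝ) - 2 * Real.log (K + 1)) + Real.log ‖F 0‖ ≤
      Real.log C' + M * Real.log (1 + b * (K + 1)) + 2 * τ * (b * (K + 1)) := by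
    intro K
    set R := b * (K + 1) with hR
    have hR0 : 0 < R := by positivity
    let ctr : Bool × ℕ → ℝ := fun p => (if p.1 then 1 else -1) * (b * (p.2 + 1))
    let I : Finset (Bool × ℕ) := Finset.univ ×ˢ Finset.range K
    have habs : ∀ p, |ctr p| = b * (p.2 + 1) := by
      intro p
      simp only [ctr]
      split_ifs
      · rw [one_mul, abs_of_pos (by positivity)]
      · rw [abs_mul, abs_neg, abs_one, one_mul, abs_of_pos (by positivity)]
    have hsep : ∀ p q, p ≠ q → b ≤ |ctr p - ctr q| := by
      rintro ⟨s, k⟩ ⟨t, l⟩ hpq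
      have hk : (0 : ℝ) ≤ k := Nat.cast_nonneg k
      have hl : (0 : ℝ) ≤ l := Nat.cast_nonneg l
      have same : s = t → (1 : ℝ) ≤ |(k : ℝ) - l| := by
        rintro rfl
        have : (k : ℤ) - l ≠ 0 := by
          intro h; apply hpq; congr 1; omega
        exact_mod_cast Int.one_le_abs this
      rcases s <;> rcases t <;> simp only [ctr, if_true, if_false, Bool.false_eq_true]
      · have := same rfl
        rw [show -1 * (b * ((k : ℝ) + 1)) - -1 * (b * (l + 1)) = -(b * (k - l)) by ring,
          abs_neg, abs_mul, abs_of_pos hb0]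
        nlinarith
      · rw [le_abs]; right; nlinarith
      · rw [le_abs]; left; nlinarith
      · have := same rfl
        rw [show 1 * (b * ((k : ℝ) + 1)) - 1 * (b * (l + 1)) = (b * (k - l)) by ring,
          abs_mul, abs_of_pos hb0]
        nlinarith
    have hmem : ∀ p, ∀ x ∈ T (ctr p), |x - ctr p| ≤ r := by
      intro p x hx
      have := (hTS (ctr p) hx).2
      rw [abs_le]; constructor <;> linarith [this.1, this.2]
    have hdisj : (I : Set (Bool × ℕ)).PairwiseDisjoint fun p => T (ctr p) := by
      intro p _ q _ hpq
      rw [Function.onFun, Finset.disjoint_left]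
      intro x hx hx'
      have h1 := hmem p x hx
      have h2 := hmem q x hx'
      have h3 := hsep p q hpq
      have h4 : |ctr p - ctr q| ≤ |x - ctr p| + |x - ctr q| := by
        rw [abs_sub_comm x (ctr p)]
        exact (abs_sub_le _ x _)
      linarith
    let Z : Finset ℂ := (I.biUnion fun p => T (ctr p)).map ⟨((↑) : ℝ → ℂ), Complex.ofReal_injective⟩
    have hsz : ∀ p ∈ I, ∀ x ∈ T (ctr p), |x| ≤ b * (p.2 + 2) := by
      intro p _ x hx
      have h1 := hmem p x hx
      have h2 : |x| ≤ |x - ctr p| + |ctr p| := by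
        simpa using abs_add_le (x - ctr p) (ctr p)
      rw [habs] at h2
      linarith
    have hx0 : ∀ p, ∀ x ∈ T (ctr p), x ≠ 0 := by
      rintro p x hx rfl
      exact h0 (by simpa using hS 0 (hTS (ctr p) hx).1)
    have hZ : ∀ z ∈ Z, F z = 0 ∧ ‖z‖ ≤ R := by
      intro z hz
      simp only [Z, Finset.mem_map, Finset.mem_biUnion] at hz
      obtain ⟨x, ⟨p, hp, hx⟩, rfl⟩ := hz
      refine ⟨hS x (hTS _ hx).1, ?_⟩
      have h1 := hsz p hp x hx
      have h2 : p.2 < K := by simpa [I] using hp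
      have h3 : (p.2 : ℝ) + 1 ≤ K := by exact_mod_cast h2
      simp only [Function.Embedding.coeFn_mk, Complex.norm_real, Real.norm_eq_abs]
      nlinarith
    have hJ := sum_log_le_circleAverage hF h0 hR0 Z hZ
    have hlow : 2 * m * ((K : ℝ) - 2 * Real.log (K + 1)) ≤ ∑ z ∈ Z, Real.log (R / ‖z‖) := by
      simp only [Z, Finset.sum_map, Function.Embedding.coeFn_mk]
      rw [Finset.sum_biUnion hdisj]
      calc 2 * m * ((K : ℝ) - 2 * Real.log (K + 1))
          ≤ 2 * m * ∑ k ∈ Finset.range K, Real.log ((K + 1 : ℝ) / (k + 2)) := by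
            gcongr; exact sub_two_log_le_sum_log_div K
        _ = ∑ p ∈ I, m * Real.log ((K + 1 : ℝ) / (p.2 + 2)) := by
            simp only [I, Finset.sum_product, Finset.mul_sum]
            simp [Finset.mul_sum]
            refine Finset.sum_congr rfl fun k _ => by ring
        _ ≤ _ := by
            refine Finset.sum_le_sum fun p hp => ?_
            rw [← hTc (ctr p), ← nsmul_eq_mul, ← Finset.sum_const]
            refine Finset.sum_le_sum fun x hx => ?_
            have h1 := hsz p hp x hx
            have h2 : 0 < |x| := abs_pos.2 (hx0 p x hx)
            rw [Complex.norm_real, Real.norm_eq_abs]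
            refine Real.log_le_log (by positivity) ?_
            rw [div_le_div_iff₀ (by positivity) h2]
            nlinarith
    have hup : Real.circleAverage (fun z => Real.log ‖F z‖) 0 R ≤
        Real.log C' + M * Real.log (1 + R) + 2 * τ * R := by
      have hcst : Real.log C' + M * Real.log (1 + R) + 2 * τ * R =
          Real.circleAverage (fun z : ℂ => (Real.log C' + M * Real.log (1 + R)) +
            Real.pi * τ * |z.im|) 0 R := by
        rw [Real.circleAverage_fun_add, circleAverage_mul_abs_im _ hR0.le,
          Real.circleAverage_const]
        · field_simp
        · exact circleIntegrable_const _ _ _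
        · exact ContinuousOn.circleIntegrable hR0.le (by fun_prop)
      rw [hcst]
      apply Real.circleAverage_mono
      · exact MeromorphicOn.circleIntegrable_log_norm
          (fun z _ => (hF.analyticAt z).meromorphicAt)
      · exact ContinuousOn.circleIntegrable hR0.le (by fun_prop)
      · intro z hz
        have hzR : ‖z‖ = R := by simpa [abs_of_pos hR0] using hz
        have hL : 0 ≤ Real.log (1 + R) := Real.log_nonneg (by linarith)
        by_cases hFz : F z = 0
        · simp only [hFz, norm_zero, Real.log_zero]
          have := Real.log_nonneg hC'1
          positivity
        · have h1 : ‖F z‖ ≤ C' * (1 + R) ^ M * Real.exp (Real.pi * τ * |z.im|) := by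
            refine (hgrow z).trans ?_
            rw [hzR]
            gcongr
            exact le_max_left _ _
          have h2 := Real.log_le_log (norm_pos_iff.2 hFz) h1
          rwa [Real.log_mul (by positivity) (by positivity), Real.log_exp,
            Real.log_mul (by positivity) (by positivity), Real.log_pow] at h2
    linarith
  set a : ℝ := m - τ * b with ha
  have ha0 : 0 < a := by linarith
  have hC2 : 0 < 4 * (m : ℝ) + M + 1 := by positivity
  set C1 : ℝ := Real.log C' + M * Real.log (1 + b) - Real.log ‖F 0‖ + 2 * m with hC1
  have hlog := (Real.isLittleO_log_id_atTop.bound (div_pos ha0 hC2))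
  obtain ⟨y, hy⟩ := (hlog.and (eventually_gt_atTop (max 1 ((C1 + 1) / a)))).exists_forall_of_atTop
  obtain ⟨K, hK⟩ := exists_nat_ge (max y 0)
  have hK1 : y ≤ (K : ℝ) + 1 := (le_max_left y 0).trans (by linarith)
  obtain ⟨h1, h2⟩ := hy _ hK1
  have h3 := (max_lt_iff.1 h2).1
  have h4 := (max_lt_iff.1 h2).2
  rw [div_lt_iff₀ ha0] at h4
  have hl0 : 0 ≤ Real.log ((K : ℝ) + 1) := Real.log_nonneg h3.le
  rw [Real.norm_of_nonneg hl0, id, Real.norm_of_nonneg (by linarith)] at h1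
  have h5 : (4 * (m : ℝ) + M + 1) * Real.log ((K : ℝ) + 1) ≤ a * ((K : ℝ) + 1) := by
    calc _ ≤ (4 * (m : ℝ) + M + 1) * (a / (4 * (m : ℝ) + M + 1) * ((K : ℝ) + 1)) := by gcongr
      _ = _ := by field_simp
  have h6 : Real.log (1 + b * ((K : ℝ) + 1)) ≤ Real.log (1 + b) + Real.log ((K : ℝ) + 1) := by
    rw [← Real.log_mul (by positivity) (by positivity)]
    exact Real.log_le_log (by positivity) (by nlinarith)
  have h7 := key K
  have h8 := mul_le_mul_of_nonneg_left h6 (Nat.cast_nonneg (α := ℝ) M)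
  nlinarith

/-- An integral of entire functions, locally uniformly dominated by integrable functions,
is entire. -/
theorem differentiable_integral_of_dominated {α : Type*} [MeasurableSpace α] {μ : Measure α}
    {K : ℂ → α → ℂ} {b : ℝ → α → ℝ} (hdiff : ∀ a, Differentiable ℂ (fun z => K z a))
    (hmeas : ∀ z, AEStronglyMeasurable (K z) μ) (h_int : ∀ R, Integrable (b R) μ)
    (hb : ∀ R z a, ‖z‖ ≤ R → ‖K z a‖ ≤ b R a) :
    Differentiable ℂ (fun z => ∫ a, K z a ∂μ) := by
  intro z₀
  have hmeas' : AEStronglyMeasurable (fun a => deriv (fun z => K z a) z₀) μ := by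
    refine aestronglyMeasurable_of_tendsto_ae (u := atTop (α := ℕ))
      (f := fun n a => ((1 / ((n : ℝ) + 1) : ℝ) : ℂ)⁻¹ *
        (K (z₀ + ((1 / ((n : ℝ) + 1) : ℝ) : ℂ)) a - K z₀ a)) ?_ ?_
    · intro n
      exact ((hmeas _).sub (hmeas _)).const_mul _
    · refine Eventually.of_forall fun a => ?_
      have h := ((hdiff a) z₀).hasDerivAt.tendsto_slope_zero
      have hu : Tendsto (fun n : ℕ => ((1 / ((n : ℝ) + 1) : ℝ) : ℂ)) atTop (nhdsWithin 0 {0}ᶜ) := by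
        refine tendsto_nhdsWithin_iff.2 ⟨?_, Eventually.of_forall fun n => ?_⟩
        · have := (Complex.continuous_ofReal.tendsto 0).comp
            (tendsto_one_div_add_atTop_nhds_zero_nat (𝕜 := ℝ))
          simpa [Function.comp_def] using this
        · simp only [Set.mem_compl_iff, Set.mem_singleton_iff, Complex.ofReal_eq_zero]
          positivity
      simpa [Function.comp_def, smul_eq_mul] using h.comp hu
  have hK_int : Integrable (K z₀) μ :=
    (h_int ‖z₀‖).mono' (hmeas z₀) (Eventually.of_forall fun a => hb _ _ a le_rfl)
  refine (hasDerivAt_integral_of_dominated_loc_of_deriv_le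
    (F' := fun z a => deriv (fun z => K z a) z) (bound := b (‖z₀‖ + 2))
    (Metric.ball_mem_nhds z₀ one_pos) (Eventually.of_forall hmeas) hK_int hmeas' ?_ (h_int _)
    ?_).2.differentiableAt
  · refine Eventually.of_forall fun a z hz => ?_
    have := Complex.norm_deriv_le_of_forall_mem_sphere_norm_le (c := z) (R := 1)
      (C := b (‖z₀‖ + 2) a) one_pos (hdiff a).diffContOnCl (fun w hw => hb _ _ _ ?_)
    · simpa using this
    · have h1 : ‖w - z‖ = 1 := by simpa [dist_eq_norm] using hw
      have h2 : ‖z - z₀‖ < 1 := by simpa [dist_eq_norm] using hz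
      calc ‖w‖ = ‖(w - z) + (z - z₀) + z₀‖ := by congr 1; ring
        _ ≤ ‖w - z‖ + ‖z - z₀‖ + ‖z₀‖ := norm_add₃_le
        _ ≤ ‖z₀‖ + 2 := by linarith
  · exact Eventually.of_forall fun a z _ => (hdiff a z).hasDerivAt

theorem fourier_mul_cexp_inner (ψ : V → ℂ) (x y : V) :
    𝓕 (fun ξ => ψ ξ * Complex.exp (2 * Real.pi * Complex.I * (⟪x, ξ⟫ : ℝ))) y = 𝓕 ψ (y - x) := by
  rw [Real.fourier_eq', Real.fourier_eq']
  refine integral_congr_ae (Eventually.of_forall fun ξ => ?_)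
  simp only [smul_eq_mul]
  rw [mul_comm (ψ ξ), ← mul_assoc, ← Complex.exp_add, inner_sub_right, real_inner_comm x ξ]
  congr 2
  push_cast
  ring

theorem contDiff_cexp_inner (x : V) :
    ContDiff ℝ (⊤ : ℕ∞) (fun ξ : V => Complex.exp (2 * Real.pi * Complex.I * (⟪x, ξ⟫ : ℝ))) := by
  refine Complex.contDiff_exp.comp (contDiff_const.mul (Complex.ofRealCLM.contDiff.comp ?_))
  exact contDiff_const.inner ℝ contDiff_id

theorem integrable_fourier_of_contDiff {ψ : V → ℂ} (h1 : ContDiff ℝ (⊤ : ℕ∞) ψ)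
    (h2 : HasCompactSupport ψ) : Integrable (𝓕 ψ) := by
  have h := (𝓕 (h2.toSchwartzMap h1)).integrable (μ := (volume : Measure V))
  rwa [SchwartzMap.fourier_coe] at h

theorem continuous_fourier_of_contDiff {ψ : V → ℂ} (h1 : ContDiff ℝ (⊤ : ℕ∞) ψ)
    (h2 : HasCompactSupport ψ) : Continuous (𝓕 ψ) := by
  have h := (𝓕 (h2.toSchwartzMap h1)).continuous
  rwa [SchwartzMap.fourier_coe] at h

/-- Fourier inversion at the origin. -/
theorem integral_fourier_mul_cexp {ψ : V → ℂ} (h1 : ContDiff ℝ (⊤ : ℕ∞) ψ)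
    (h2 : HasCompactSupport ψ) (ξ : V) :
    ∫ x, Complex.exp (2 * Real.pi * Complex.I * (⟪ξ, x⟫ : ℝ)) * 𝓕 ψ x = ψ ξ := by
  have h := congrFun (Continuous.fourierInv_fourier_eq h1.continuous
    (h1.continuous.integrable_of_hasCompactSupport h2) (integrable_fourier_of_contDiff h1 h2)) ξ
  rw [Real.fourierInv_eq'] at h
  rw [← h]
  refine integral_congr_ae (Eventually.of_forall fun x => ?_)
  simp only [smul_eq_mul]
  rw [real_inner_comm]
  congr 2
  push_cast
  ring

theorem integrable_mul_fourier {f ψ : V → ℂ} {B : ℝ} (hf : Continuous f) (hB : ∀ x, ‖f x‖ ≤ B)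
    (h1 : ContDiff ℝ (⊤ : ℕ∞) ψ) (h2 : HasCompactSupport ψ) (x : V) :
    Integrable (fun y => f y * 𝓕 ψ (y - x)) :=
  ((integrable_fourier_of_contDiff h1 h2).comp_sub_right x).bdd_mul
    hf.aestronglyMeasurable (Eventually.of_forall hB)

/-- A smooth compactly supported cutoff which is `1` near a compact set. -/
theorem exists_cutoff {Ω U : Set V} (hΩ : IsCompact Ω) (hU : IsOpen U) (hΩU : Ω ⊆ U) :
    ∃ ψ : V → ℂ, ContDiff ℝ (⊤ : ℕ∞) ψ ∧ HasCompactSupport ψ ∧ tsupport ψ ⊆ U ∧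
      ∀ ξ ∈ Ω, ∀ᶠ η in nhds ξ, ψ η = 1 := by
  obtain ⟨L, hL, hΩL, hLU⟩ := exists_compact_between hΩ hU hΩU
  obtain ⟨f, h1, h0, -⟩ := exists_contMDiffMap_one_nhds_of_subset_interior
    (modelWithCornersSelf ℝ V) (n := (⊤ : ℕ∞)) hΩ.isClosed hΩL
  have hsupp : Function.support (fun ξ => (f ξ : ℂ)) ⊆ L := by
    intro ξ hξ
    by_contra h
    exact hξ (by simp [h0 ξ h])
  refine ⟨fun ξ => (f ξ : ℂ), ?_, HasCompactSupport.of_support_subset_isCompact hL hsupp,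
    (closure_minimal hsupp hL.isClosed).trans hLU, fun ξ hξ => ?_⟩
  · exact Complex.ofRealCLM.contDiff.comp f.contMDiff.contDiff
  · have := (mem_nhdsSet_iff_forall.1 h1) ξ hξ
    filter_upwards [this] with η hη
    simp [hη]

theorem fourier_comp_smul (χ : V → ℂ) {n : ℝ} (hn : 0 < n) (y : V) :
    𝓕 (fun ξ => χ (n⁻¹ • ξ)) y = (n ^ Module.finrank ℝ V : ℝ) • 𝓕 χ (n • y) := by
  rw [Real.fourier_eq', Real.fourier_eq', ← Measure.integral_comp_inv_smul_of_nonneg _ _ hn.le]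
  refine integral_congr_ae (Eventually.of_forall fun ξ => ?_)
  simp only
  rw [inner_smul_left, inner_smul_right]
  simp [hn.ne']

/-- Elements of the Bernstein space are reproduced by convolution with the Fourier transform of a
cutoff of the spectrum. -/
theorem MemBernstein.eq_integral {Ω : Set V} {f : V → ℂ} (hf : MemBernstein Ω f)
    (hΩ : IsCompact Ω) {ψ : V → ℂ} (h1 : ContDiff ℝ (⊤ : ℕ∞) ψ) (h2 : HasCompactSupport ψ)
    (hψ : ∀ ξ ∈ Ω, ∀ᶠ η in nhds ξ, ψ η = 1) (x : V) :
    f x = ∫ y, f y * 𝓕 ψ (y - x) := by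
  obtain ⟨hcont, ⟨B, hB⟩, hvan⟩ := hf
  obtain ⟨χ, c1, c2, -, cχ⟩ := exists_cutoff (isCompact_closedBall (0 : V) 1) isOpen_univ
    (Set.subset_univ _)
  have hχ1 : ∀ ξ ∈ closedBall (0 : V) 1, χ ξ = 1 := fun ξ hξ => (cχ ξ hξ).self_of_nhds
  obtain ⟨R, hR⟩ := hΩ.isBounded.subset_ball (0 : V)
  have hχn1 : ∀ n : ℕ, ContDiff ℝ (⊤ : ℕ∞) (fun ξ => χ (((n : ℝ) + 1)⁻¹ • ξ)) :=
    fun n => c1.comp (contDiff_const.smul contDiff_id)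
  have hχn2 : ∀ n : ℕ, HasCompactSupport (fun ξ => χ (((n : ℝ) + 1)⁻¹ • ξ)) :=
    fun n => c2.comp_smul (by positivity)
  have key : ∀ᶠ n : ℕ in atTop,
      ∫ y, f y * 𝓕 ψ (y - x) = ∫ y, f (x + ((n : ℝ) + 1)⁻¹ • y) * 𝓕 χ y := by
    filter_upwards [eventually_ge_atTop ⌈R⌉₊] with n hn
    have hnR : R ≤ n := (Nat.le_ceil R).trans (by exact_mod_cast hn)
    have hn0 : (0 : ℝ) < n + 1 := by positivity
    have hz := hvan (fun ξ => (ψ ξ - χ (((n : ℝ) + 1)⁻¹ • ξ)) *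
      Complex.exp (2 * Real.pi * Complex.I * (⟪x, ξ⟫ : ℝ)))
      ((h1.sub (hχn1 n)).mul (contDiff_cexp_inner x)) ((h2.sub (hχn2 n)).mul_right) ?_
    · have hsub : ∀ y, 𝓕 (fun ξ => (ψ ξ - χ (((n : ℝ) + 1)⁻¹ • ξ)) *
          Complex.exp (2 * Real.pi * Complex.I * (⟪x, ξ⟫ : ℝ))) y =
          𝓕 ψ (y - x) - 𝓕 (fun ξ => χ (((n : ℝ) + 1)⁻¹ • ξ)) (y - x) := by
        intro y
        have := fourier_mul_cexp_inner (fun ξ => ψ ξ - χ (((n : ℝ) + 1)⁻¹ • ξ)) x y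
        rw [this, Real.fourier_eq, Real.fourier_eq, Real.fourier_eq, ← integral_sub]
        · simp only [smul_sub]
        · exact (Real.fourierIntegral_convergent_iff _).2
            (h1.continuous.integrable_of_hasCompactSupport h2)
        · exact (Real.fourierIntegral_convergent_iff _).2
            ((hχn1 n).continuous.integrable_of_hasCompactSupport (hχn2 n))
      simp only [hsub, mul_sub] at hz
      rw [integral_sub (integrable_mul_fourier hcont hB h1 h2 x)
        (integrable_mul_fourier hcont hB (hχn1 n) (hχn2 n) x), sub_eq_zero] at hz
      rw [hz, ← integral_add_right_eq_self _ x]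
      simp only [add_sub_cancel_right, fourier_comp_smul χ hn0]
      have := Measure.integral_comp_inv_smul_of_nonneg (volume : Measure V)
        (fun y => f (y + x) * 𝓕 χ (((n : ℝ) + 1) • y)) hn0.le
      simp only [smul_smul, mul_inv_cancel₀ hn0.ne', one_smul] at this
      simp only [add_comm x]
      rw [this, ← integral_smul]
      refine integral_congr_ae (Eventually.of_forall fun y => ?_)
      simp only [Complex.real_smul]
      ring
    · rw [Set.eq_empty_iff_forall_notMem]
      rintro ξ ⟨hξ1, hξ2⟩
      have hev : (fun ξ => (ψ ξ - χ (((n : ℝ) + 1)⁻¹ • ξ)) *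
          Complex.exp (2 * Real.pi * Complex.I * (⟪x, ξ⟫ : ℝ))) =ᶠ[nhds ξ] 0 := by
        filter_upwards [hψ ξ hξ2, isOpen_ball.mem_nhds (hR hξ2)] with η h3 h4
        have h5 : ‖η‖ < R := by simpa using h4
        have : χ (((n : ℝ) + 1)⁻¹ • η) = 1 := by
          apply hχ1
          rw [mem_closedBall_zero_iff, norm_smul, norm_inv, Real.norm_of_nonneg hn0.le,
            inv_mul_le_iff₀ hn0]
          linarith
        simp [h3, this]
      exact (notMem_tsupport_iff_eventuallyEq.2 hev) hξ1
  have hlim : Tendsto (fun n : ℕ => ∫ y, f (x + ((n : ℝ) + 1)⁻¹ • y) * 𝓕 χ y) atTop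
      (nhds (∫ y, f x * 𝓕 χ y)) := by
    refine tendsto_integral_of_dominated_convergence (fun y => B * ‖𝓕 χ y‖) (fun n => ?_)
      ((integrable_fourier_of_contDiff c1 c2).norm.const_mul B) (fun n => ?_) ?_
    · exact ((hcont.comp (by fun_prop)).mul
        (continuous_fourier_of_contDiff c1 c2)).aestronglyMeasurable
    · refine Eventually.of_forall fun y => ?_
      rw [norm_mul]
      gcongr
      exact hB _
    · refine Eventually.of_forall fun y => ?_
      refine Tendsto.mul_const _ ((hcont.tendsto x).comp ?_)
      have h := ((tendsto_one_div_add_atTop_nhds_zero_nat (𝕜 := ℝ)).smul_const y).const_add x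
      simpa [one_div] using h
  have h0 : ∫ y, 𝓕 χ y = 1 := by
    have := integral_fourier_mul_cexp c1 c2 0
    simpa [hχ1 0 (by simp)] using this
  rw [integral_const_mul, h0, mul_one] at hlim
  exact tendsto_nhds_unique hlim (tendsto_const_nhds.congr' key)

open SchwartzMap in
theorem exists_one_add_norm_pow_mul_fourier_le (n : ℕ) :
    ∃ (s : Finset (ℕ × ℕ)) (C : ℝ), 0 ≤ C ∧ ∀ (φ : SchwartzMap V ℂ) (y : V),
      (1 + ‖y‖) ^ n * ‖𝓕 (φ : V → ℂ) y‖ ≤ C * ∑ m ∈ s, SchwartzMap.seminorm ℂ m.1 m.2 φ := by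
  have hq : Continuous (((Finset.Iic (n, 0)).sup (schwartzSeminormFamily ℂ V ℂ)).comp
      (FourierTransform.fourierCLM ℂ (SchwartzMap V ℂ)).toLinearMap) := by
    have h1 : Continuous ((Finset.Iic (n, 0)).sup (schwartzSeminormFamily ℂ V ℂ) :
        Seminorm ℂ (SchwartzMap V ℂ)) :=
      Seminorm.continuous_finsetSup fun i _ => (schwartz_withSeminorms ℂ V ℂ).continuous_seminorm i
    exact h1.comp (FourierTransform.fourierCLM ℂ (SchwartzMap V ℂ)).continuous
  obtain ⟨s, C, -, hC⟩ := Seminorm.bound_of_continuous (schwartz_withSeminorms ℂ V ℂ) _ hq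
  refine ⟨s, 2 ^ n * C, by positivity, fun φ y => ?_⟩
  have h1 := one_add_le_sup_seminorm_apply (𝕜 := ℂ) (m := (n, 0)) (k := n) (n := 0)
    le_rfl le_rfl (𝓕 φ) y
  rw [norm_iteratedFDeriv_zero, SchwartzMap.fourier_coe] at h1
  have h2 := hC φ
  have h3 : (s.sup (schwartzSeminormFamily ℂ V ℂ)) φ ≤
      ∑ m ∈ s, SchwartzMap.seminorm ℂ m.1 m.2 φ := by
    have := Seminorm.finset_sup_le_sum (schwartzSeminormFamily ℂ V ℂ) s φ
    refine this.trans (le_of_eq ?_)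
    simp [schwartzSeminormFamily]
  refine h1.trans ?_
  rw [mul_assoc]
  refine mul_le_mul_of_nonneg_left ?_ (by positivity)
  refine h2.trans ?_
  exact mul_le_mul_of_nonneg_left h3 C.2

theorem iteratedDeriv_cexp_affine (c d : ℂ) (n : ℕ) :
    iteratedDeriv n (fun t : ℝ => Complex.exp (c * t + d)) =
      fun t : ℝ => c ^ n * Complex.exp (c * t + d) := by
  induction n with
  | zero => simp
  | succ n ih =>
    rw [iteratedDeriv_succ, ih]
    ext t
    have h : HasDerivAt (fun t : ℝ => c ^ n * Complex.exp (c * t + d))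
        (c ^ n * (Complex.exp (c * t + d) * (c * 1))) t := by
      have h1 : HasDerivAt (fun t : ℝ => (t : ℂ)) 1 t := Complex.ofRealCLM.hasDerivAt
      exact (((h1.const_mul c).add_const d).cexp).const_mul _
    rw [h.deriv]
    ring

theorem norm_iteratedFDeriv_cexp_inner_le (u : V) (c d : ℂ) (n : ℕ) (ξ : V) :
    ‖iteratedFDeriv ℝ n (fun ξ : V => Complex.exp (c * (⟪u, ξ⟫ : ℝ) + d)) ξ‖ ≤
      (‖c‖ * ‖u‖) ^ n * ‖Complex.exp (c * (⟪u, ξ⟫ : ℝ) + d)‖ := by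
  have he : ContDiff ℝ (n : ℕ∞) (fun t : ℝ => Complex.exp (c * t + d)) :=
    Complex.contDiff_exp.comp ((contDiff_const.mul Complex.ofRealCLM.contDiff).add contDiff_const)
  have h := (innerSL ℝ u).iteratedFDeriv_comp_right he ξ (i := n) le_rfl
  have h' : (fun ξ : V => Complex.exp (c * (⟪u, ξ⟫ : ℝ) + d)) =
      (fun t : ℝ => Complex.exp (c * t + d)) ∘ (innerSL ℝ u) := rfl
  rw [h', h]
  refine (ContinuousMultilinearMap.norm_compContinuousLinearMap_le _ _).trans ?_
  rw [norm_iteratedFDeriv_eq_norm_iteratedDeriv, iteratedDeriv_cexp_affine]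
  simp only [norm_mul, norm_pow, Finset.prod_const, Finset.card_univ, Fintype.card_fin,
    innerSL_apply_norm, innerSL_apply_apply]
  rw [mul_pow]
  apply le_of_eq
  ring

/-- Seminorm bounds for a cutoff modulated by a complex frequency. -/
theorem exists_norm_pow_mul_iteratedFDeriv_le {ψ : V → ℂ} (h1 : ContDiff ℝ (⊤ : ℕ∞) ψ)
    (h2 : HasCompactSupport ψ) (u : V) (a : ℝ) {σ : ℝ}
    (hσ : ∀ ξ ∈ tsupport ψ, |⟪u, ξ⟫ - a| ≤ σ / 2) (k l : ℕ) :
    ∃ C, 0 ≤ C ∧ ∀ (z : ℂ) (ξ : V),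
      ‖ξ‖ ^ k * ‖iteratedFDeriv ℝ l (fun ξ => ψ ξ *
        Complex.exp (2 * Real.pi * Complex.I * z * (⟪u, ξ⟫ : ℝ) +
          -(2 * Real.pi * Complex.I * z * a))) ξ‖ ≤
        C * ((1 + ‖z‖) ^ l * Real.exp (Real.pi * σ * |z.im|)) := by
  have hbd : ∀ i, ∃ A, 0 ≤ A ∧ ∀ ξ, ‖ξ‖ ^ k * ‖iteratedFDeriv ℝ i ψ ξ‖ ≤ A := by
    intro i
    refine ⟨SchwartzMap.seminorm ℂ k i (h2.toSchwartzMap h1), by positivity, fun ξ => ?_⟩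
    exact SchwartzMap.le_seminorm ℂ k i (h2.toSchwartzMap h1) ξ
  choose A hA0 hA using hbd
  set c₀ : ℝ := 2 * Real.pi * ‖u‖ with hc₀
  have hc₀0 : 0 ≤ c₀ := by positivity
  refine ⟨∑ i ∈ Finset.range (l + 1), (l.choose i : ℝ) * A i * (1 + c₀) ^ l,
    Finset.sum_nonneg fun i _ => mul_nonneg (mul_nonneg (by positivity) (hA0 i)) (by positivity),
    fun z ξ => ?_⟩
  set E : V → ℂ := fun ξ => Complex.exp (2 * Real.pi * Complex.I * z * (⟪u, ξ⟫ : ℝ) +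
    -(2 * Real.pi * Complex.I * z * a)) with hE
  by_cases hξ : ξ ∈ tsupport ψ
  swap
  · have h0 : iteratedFDeriv ℝ l (fun ξ => ψ ξ * E ξ) ξ = 0 := by
      have : ξ ∉ tsupport (fun ξ => ψ ξ * E ξ) := fun h => hξ (tsupport_mul_subset_left h)
      by_contra h
      exact this (support_iteratedFDeriv_subset l h)
    rw [h0, norm_zero, mul_zero]
    exact mul_nonneg (Finset.sum_nonneg fun i _ =>
      mul_nonneg (mul_nonneg (by positivity) (hA0 i)) (by positivity)) (by positivity)
  have hEc : ContDiff ℝ (⊤ : ℕ∞) E := by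
    refine Complex.contDiff_exp.comp ((contDiff_const.mul
      (Complex.ofRealCLM.contDiff.comp ?_)).add contDiff_const)
    exact contDiff_const.inner ℝ contDiff_id
  have hEn : ‖E ξ‖ ≤ Real.exp (Real.pi * σ * |z.im|) := by
    rw [hE, Complex.norm_exp]
    refine Real.exp_le_exp.2 ?_
    have : (2 * Real.pi * Complex.I * z * (⟪u, ξ⟫ : ℝ) +
        -(2 * Real.pi * Complex.I * z * a)).re = -(2 * Real.pi * (z.im * (⟪u, ξ⟫ - a))) := by
      simp
      ring
    rw [this]
    have h3 : |z.im * (⟪u, ξ⟫ - a)| ≤ |z.im| * (σ / 2) := by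
      rw [abs_mul]
      exact mul_le_mul_of_nonneg_left (hσ ξ hξ) (abs_nonneg _)
    have h4 := (neg_le_abs _).trans h3
    nlinarith [Real.pi_pos]
  have hcoef : ‖(2 * Real.pi * Complex.I * z : ℂ)‖ * ‖u‖ ≤ (1 + c₀) * (1 + ‖z‖) := by
    simp only [norm_mul, Complex.norm_ofNat, Complex.norm_real, Complex.norm_I,
      Real.norm_of_nonneg Real.pi_pos.le]
    have : 2 * Real.pi * 1 * ‖z‖ * ‖u‖ = c₀ * ‖z‖ := by rw [hc₀]; ring
    rw [this]
    nlinarith [norm_nonneg z]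
  have hprod := norm_iteratedFDeriv_mul_le (n := l) (N := (⊤ : ℕ∞)) h1 hEc ξ
    (by exact_mod_cast le_top)
  refine (mul_le_mul_of_nonneg_left hprod (by positivity)).trans ?_
  rw [Finset.mul_sum, Finset.sum_mul]
  refine Finset.sum_le_sum fun i _ => ?_
  have hd := norm_iteratedFDeriv_cexp_inner_le u (2 * Real.pi * Complex.I * z)
    (-(2 * Real.pi * Complex.I * z * a)) (l - i) ξ
  have hp : (‖(2 * Real.pi * Complex.I * z : ℂ)‖ * ‖u‖) ^ (l - i) ≤
      (1 + c₀) ^ l * (1 + ‖z‖) ^ l := by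
    rw [← mul_pow]
    refine (pow_le_pow_left₀ (by positivity) hcoef _).trans ?_
    exact pow_le_pow_right₀ (by nlinarith [norm_nonneg z, mul_nonneg hc₀0 (norm_nonneg z)])
      (Nat.sub_le _ _)
  have hd2 : ‖iteratedFDeriv ℝ (l - i) E ξ‖ ≤
      ((1 + c₀) ^ l * (1 + ‖z‖) ^ l) * Real.exp (Real.pi * σ * |z.im|) :=
    hd.trans (mul_le_mul hp hEn (norm_nonneg _) (by positivity))
  calc ‖ξ‖ ^ k * ((l.choose i : ℝ) * ‖iteratedFDeriv ℝ i ψ ξ‖ * ‖iteratedFDeriv ℝ (l - i) E ξ‖)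
      = (l.choose i : ℝ) * (‖ξ‖ ^ k * ‖iteratedFDeriv ℝ i ψ ξ‖) *
        ‖iteratedFDeriv ℝ (l - i) E ξ‖ := by ring
    _ ≤ (l.choose i : ℝ) * A i *
        (((1 + c₀) ^ l * (1 + ‖z‖) ^ l) * Real.exp (Real.pi * σ * |z.im|)) := by
        refine mul_le_mul (mul_le_mul_of_nonneg_left (hA i ξ) (by positivity)) hd2
          (norm_nonneg _) (mul_nonneg (by positivity) (hA0 i))
    _ = _ := by ring

/-- Along a direction in which the spectrum has width less than `σ`, the elements of a Bernstein
space extend (after a modulation) to entire functions of exponential type `π σ`. -/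
theorem exists_entire_extension {Ω : Set V} (hΩ : IsCompact Ω) (u : V) {a σ : ℝ}
    (h : ∀ ξ ∈ Ω, |⟪u, ξ⟫ - a| < σ / 2) :
    ∃ (C : ℝ) (M : ℕ), 0 ≤ C ∧ ∀ f, MemBernstein Ω f → ∀ B, (∀ x, ‖f x‖ ≤ B) → ∀ x : V,
      ∃ F : ℂ → ℂ, Differentiable ℂ F ∧
        (∀ t : ℝ, F t = Complex.exp (-(2 * Real.pi * Complex.I * t * a)) * f (x + t • u)) ∧
        ∀ z, ‖F z‖ ≤ B * C * (1 + ‖z‖) ^ M * Real.exp (Real.pi * σ * |z.im|) := by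
  obtain ⟨ψ, h1, h2, hsub, hψ⟩ := exists_cutoff (U := {ξ : V | |⟪u, ξ⟫ - a| < σ / 2}) hΩ
    (isOpen_lt (by fun_prop) continuous_const) h
  have hσ : ∀ ξ ∈ tsupport ψ, |⟪u, ξ⟫ - a| ≤ σ / 2 := fun ξ hξ => (hsub hξ).le
  set E : ℂ → V → ℂ := fun z ξ => Complex.exp (2 * Real.pi * Complex.I * z * (⟪u, ξ⟫ : ℝ) +
    -(2 * Real.pi * Complex.I * z * a)) with hE
  have hEc : ∀ z, ContDiff ℝ (⊤ : ℕ∞) (E z) := by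
    intro z
    refine Complex.contDiff_exp.comp ((contDiff_const.mul
      (Complex.ofRealCLM.contDiff.comp ?_)).add contDiff_const)
    exact contDiff_const.inner ℝ contDiff_id
  have hg1 : ∀ z, ContDiff ℝ (⊤ : ℕ∞) (fun ξ => ψ ξ * E z ξ) := fun z => h1.mul (hEc z)
  have hg2 : ∀ z, HasCompactSupport (fun ξ => ψ ξ * E z ξ) := fun z => h2.mul_right
  choose A hA0 hA using fun m : ℕ × ℕ =>
    exists_norm_pow_mul_iteratedFDeriv_le h1 h2 u a hσ m.1 m.2
  obtain ⟨s, C₁, hC₁, hs⟩ :=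
    exists_one_add_norm_pow_mul_fourier_le (V := V) (Module.finrank ℝ V + 1)
  set M := s.sup Prod.snd
  set C₂ := C₁ * ∑ m ∈ s, A m
  have hC₂ : 0 ≤ C₂ := mul_nonneg hC₁ (Finset.sum_nonneg fun m _ => hA0 m)
  have hdecay : ∀ z y, ‖𝓕 (fun ξ => ψ ξ * E z ξ) y‖ ≤
      C₂ * ((1 + ‖z‖) ^ M * Real.exp (Real.pi * σ * |z.im|)) *
        (1 + ‖y‖) ^ (-(Module.finrank ℝ V + 1 : ℝ)) := by
    intro z y
    have h3 := hs ((hg2 z).toSchwartzMap (hg1 z)) y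
    have h4 : ∀ m ∈ s, SchwartzMap.seminorm ℂ m.1 m.2 ((hg2 z).toSchwartzMap (hg1 z)) ≤
        A m * ((1 + ‖z‖) ^ M * Real.exp (Real.pi * σ * |z.im|)) := by
      intro m hm
      refine SchwartzMap.seminorm_le_bound ℂ _ _ _ (mul_nonneg (hA0 m) (by positivity))
        fun ξ => (hA m z ξ).trans ?_
      refine mul_le_mul_of_nonneg_left (mul_le_mul_of_nonneg_right ?_ (Real.exp_pos _).le) (hA0 m)
      exact pow_le_pow_right₀ (by linarith [norm_nonneg z]) (Finset.le_sup (f := Prod.snd) hm)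
    have h5 := h3.trans (mul_le_mul_of_nonneg_left (Finset.sum_le_sum h4) hC₁)
    rw [← Finset.sum_mul, ← mul_assoc] at h5
    have hy : 0 < 1 + ‖y‖ := by positivity
    rw [Real.rpow_neg hy.le, ← div_eq_mul_inv, le_div_iff₀ (by positivity), mul_comm]
    have : (1 + ‖y‖) ^ (Module.finrank ℝ V + 1 : ℝ) = (1 + ‖y‖) ^ (Module.finrank ℝ V + 1) := by
      exact_mod_cast Real.rpow_natCast (1 + ‖y‖) (Module.finrank ℝ V + 1)
    rw [this]
    exact h5
  have h_int : Integrable (fun y : V => (1 + ‖y‖) ^ (-(Module.finrank ℝ V + 1 : ℝ))) :=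
    integrable_one_add_norm (by linarith)
  set I₀ : ℝ := ∫ y : V, (1 + ‖y‖) ^ (-(Module.finrank ℝ V + 1 : ℝ)) with hI₀
  have hI₀0 : 0 ≤ I₀ := integral_nonneg fun y => by positivity
  have hFd : ∀ w, Differentiable ℂ (fun z => 𝓕 (fun ξ => ψ ξ * E z ξ) w) := by
    intro w
    simp only [Real.fourier_eq]
    refine differentiable_integral_of_dominated (μ := (volume : Measure V))
      (K := fun z ξ => 𝐞 (-⟪ξ, w⟫) • (ψ ξ * E z ξ))
      (b := fun R ξ => ‖ψ ξ‖ * Real.exp (Real.pi * |σ| * R)) (fun ξ => ?_) (fun z => ?_)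
      (fun R => ?_) (fun R z ξ hz => ?_)
    · simp only [Circle.smul_def, smul_eq_mul, hE]
      fun_prop
    · have := ((Real.fourierIntegral_convergent_iff w).2
        ((hg1 z).continuous.integrable_of_hasCompactSupport (μ := (volume : Measure V)) (hg2 z)))
      exact this.aestronglyMeasurable
    · exact ((h1.continuous.integrable_of_hasCompactSupport (μ := (volume : Measure V))
        h2).norm).mul_const _
    · rw [Circle.norm_smul, norm_mul]
      by_cases hξ : ψ ξ = 0
      · simp [hξ]
      have hξ' : ξ ∈ tsupport ψ := subset_tsupport _ hξ
      refine mul_le_mul_of_nonneg_left ?_ (norm_nonneg _)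
      rw [hE, Complex.norm_exp]
      refine Real.exp_le_exp.2 ?_
      have : (2 * Real.pi * Complex.I * z * (⟪u, ξ⟫ : ℝ) +
          -(2 * Real.pi * Complex.I * z * a)).re = -(2 * Real.pi * (z.im * (⟪u, ξ⟫ - a))) := by
        simp
        ring
      rw [this]
      have h3 : |z.im * (⟪u, ξ⟫ - a)| ≤ R * (|σ| / 2) := by
        rw [abs_mul]
        exact mul_le_mul ((Complex.abs_im_le_norm z).trans hz)
          ((hσ ξ hξ').trans (by linarith [le_abs_self σ])) (abs_nonneg _)
          ((norm_nonneg z).trans hz)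
      have h4 := (neg_le_abs _).trans h3
      nlinarith [Real.pi_pos]
  refine ⟨C₂ * I₀, M, mul_nonneg hC₂ hI₀0, fun f hf B hB x => ?_⟩
  have hB0 : 0 ≤ B := (norm_nonneg _).trans (hB 0)
  refine ⟨fun z => ∫ y, f y * 𝓕 (fun ξ => ψ ξ * E z ξ) (y - x), ?_, fun t => ?_, fun z => ?_⟩
  · refine differentiable_integral_of_dominated
      (K := fun z y => f y * 𝓕 (fun ξ => ψ ξ * E z ξ) (y - x))
      (b := fun R y => B * (C₂ * ((1 + R) ^ M * Real.exp (Real.pi * |σ| * R)) *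
        (1 + ‖y - x‖) ^ (-(Module.finrank ℝ V + 1 : ℝ)))) (fun y => ?_) (fun z => ?_) (fun R => ?_)
      (fun R z y hz => ?_)
    · exact (hFd (y - x)).const_mul _
    · exact (integrable_mul_fourier hf.1 hB (hg1 z) (hg2 z) x).aestronglyMeasurable
    · exact ((h_int.comp_sub_right x).const_mul _).const_mul _
    · rw [norm_mul]
      refine mul_le_mul (hB y) ((hdecay z (y - x)).trans ?_) (norm_nonneg _) hB0
      have hR : 0 ≤ R := (norm_nonneg z).trans hz
      gcongr
      · exact le_abs_self σ
      · exact (Complex.abs_im_le_norm z).trans hz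
  · have h3 : ∀ y, 𝓕 (fun ξ => ψ ξ * E t ξ) (y - x) =
        Complex.exp (-(2 * Real.pi * Complex.I * t * a)) * 𝓕 ψ (y - (x + t • u)) := by
      intro y
      have h4 := fourier_mul_cexp_inner ψ (t • u) (y - x)
      rw [sub_sub] at h4
      rw [← h4, Real.fourier_eq, Real.fourier_eq, ← integral_const_mul]
      refine integral_congr_ae (Eventually.of_forall fun ξ => ?_)
      simp only [hE, Complex.exp_add, Circle.smul_def, smul_eq_mul, inner_smul_left]
      push_cast
      rw [show (starRingEnd ℝ) t = t from rfl]
      ring_nf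
    simp only [h3]
    rw [hf.eq_integral hΩ h1 h2 hψ (x + t • u), ← integral_const_mul]
    refine integral_congr_ae (Eventually.of_forall fun y => ?_)
    simp only
    ring
  · refine (norm_integral_le_of_norm_le (g := fun y => B * (C₂ * ((1 + ‖z‖) ^ M *
      Real.exp (Real.pi * σ * |z.im|)) * (1 + ‖y - x‖) ^ (-(Module.finrank ℝ V + 1 : ℝ))))
      (((h_int.comp_sub_right x).const_mul _).const_mul _) (Eventually.of_forall fun y => ?_)).trans
      (le_of_eq ?_)
    · rw [norm_mul]
      exact mul_le_mul (hB y) (hdecay z (y - x)) (norm_nonneg _) hB0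
    · rw [integral_const_mul, integral_const_mul,
        integral_sub_right_eq_self (fun y : V => (1 + ‖y‖) ^ (-(Module.finrank ℝ V + 1 : ℝ))) x]
      ring

/-- A compact set has bounded width in every direction. -/
theorem exists_abs_inner_lt {Ω : Set V} (hΩ : IsCompact Ω) :
    ∃ R : ℝ, 0 < R ∧ ∀ u : V, ‖u‖ ≤ 1 → ∀ ξ ∈ Ω, |⟪u, ξ⟫ - 0| < R / 2 := by
  obtain ⟨r, hr⟩ := hΩ.isBounded.subset_closedBall (0 : V)
  refine ⟨2 * (|r| + 1), by positivity, fun u hu ξ hξ => ?_⟩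
  have h1 : ‖ξ‖ ≤ r := by simpa using hr hξ
  have h2 := abs_real_inner_le_norm u ξ
  have h3 : ‖u‖ * ‖ξ‖ ≤ 1 * |r| :=
    mul_le_mul hu (h1.trans (le_abs_self r)) (norm_nonneg _) zero_le_one
  rw [sub_zero]
  linarith

/-- A function of the Bernstein space vanishing near a point of a line vanishes at every
point of this line. -/
theorem MemBernstein.eq_zero_of_segment {Ω : Set V} (hΩ : IsCompact Ω) {f : V → ℂ}
    (hf : MemBernstein Ω f) (x u : V) {t₀ : ℝ} (h0 : ∀ᶠ t : ℝ in nhds t₀, f (x + t • u) = 0)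
    (t : ℝ) : f (x + t • u) = 0 := by
  obtain ⟨r, hr⟩ := hΩ.isBounded.subset_closedBall (0 : V)
  obtain ⟨C, M, -, hC⟩ := exists_entire_extension hΩ u (a := 0) (σ := 2 * (‖u‖ * |r| + 1)) (by
    intro ξ hξ
    have h1 : ‖ξ‖ ≤ |r| := (by simpa using hr hξ : ‖ξ‖ ≤ r).trans (le_abs_self r)
    have h2 := abs_real_inner_le_norm u ξ
    have h3 : ‖u‖ * ‖ξ‖ ≤ ‖u‖ * |r| := mul_le_mul_of_nonneg_left h1 (norm_nonneg _)
    rw [sub_zero]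
    linarith)
  obtain ⟨B, hB⟩ := hf.2.1
  obtain ⟨F, hFd, hFt, -⟩ := hC f hf B hB x
  have hfreq : ∃ᶠ z in nhdsWithin (t₀ : ℂ) {(t₀ : ℂ)}ᶜ, F z = 0 := by
    have hu : Tendsto (fun s : ℝ => (s : ℂ)) (nhdsWithin t₀ {t₀}ᶜ)
        (nhdsWithin (t₀ : ℂ) {(t₀ : ℂ)}ᶜ) := by
      refine tendsto_nhdsWithin_iff.2 ⟨(Complex.continuous_ofReal.tendsto t₀).mono_left
        nhdsWithin_le_nhds, ?_⟩
      filter_upwards [self_mem_nhdsWithin] with s hs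
      simpa using hs
    refine hu.frequently ?_
    have : ∀ᶠ s : ℝ in nhdsWithin t₀ {t₀}ᶜ, F s = 0 := by
      filter_upwards [h0.filter_mono nhdsWithin_le_nhds] with s hs
      rw [hFt, hs, mul_zero]
    exact this.frequently
  have han : AnalyticOnNhd ℂ F Set.univ := fun z _ => hFd.analyticAt z
  have hz := han.eqOn_zero_of_preconnected_of_frequently_eq_zero isPreconnected_univ
    (Set.mem_univ _) hfreq (Set.mem_univ (t : ℂ))
  have := hFt t
  rw [hz] at this
  simpa [Complex.exp_ne_zero] using this.symm

/-- Bernstein's inequality, with an unspecified constant, in one direction. -/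
theorem exists_directional_lipschitz {Ω : Set V} (hΩ : IsCompact Ω) (u : V) (hu : ‖u‖ ≤ 1) :
    ∃ L : ℝ, 0 ≤ L ∧ ∀ f, MemBernstein Ω f → ∀ B, (∀ x, ‖f x‖ ≤ B) → ∀ x (t : ℝ),
      ‖f (x + t • u) - f x‖ ≤ L * B * |t| := by
  obtain ⟨R, hR, hRu⟩ := exists_abs_inner_lt hΩ
  obtain ⟨C, M, hC0, hC⟩ := exists_entire_extension hΩ u (a := 0) (hRu u hu)
  set L := C * 3 ^ M * Real.exp (Real.pi * R * 2) with hL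
  have hL0 : 0 ≤ L := by positivity
  refine ⟨L + 2, by positivity, fun f hf B hB x t => ?_⟩
  have hB0 : 0 ≤ B := (norm_nonneg _).trans (hB 0)
  obtain ⟨F, hFd, hFt, hFb⟩ := hC f hf B hB x
  simp only [Complex.ofReal_zero, mul_zero, neg_zero, Complex.exp_zero, one_mul] at hFt
  rcases le_or_gt |t| 1 with ht | ht
  · have hder : ∀ z ∈ closedBall (0 : ℂ) 1, ‖deriv F z‖ ≤ L * B := by
      intro z hz
      have := Complex.norm_deriv_le_of_forall_mem_sphere_norm_le (c := z) (R := 1)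
        (C := L * B) one_pos hFd.diffContOnCl (fun w hw => ?_)
      · simpa using this
      · have h1 : ‖w - z‖ = 1 := by simpa [dist_eq_norm] using hw
        have h2 : ‖z‖ ≤ 1 := by simpa using hz
        have h3 : ‖w‖ ≤ 2 := by
          calc ‖w‖ = ‖(w - z) + z‖ := by congr 1; ring
            _ ≤ ‖w - z‖ + ‖z‖ := norm_add_le _ _
            _ ≤ 2 := by linarith
        calc ‖F w‖ ≤ B * C * (1 + ‖w‖) ^ M * Real.exp (Real.pi * R * |w.im|) := hFb w
          _ ≤ B * C * 3 ^ M * Real.exp (Real.pi * R * 2) := by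
            gcongr
            · linarith
            · exact (Complex.abs_im_le_norm w).trans h3
          _ = L * B := by rw [hL]; ring
    have := (convex_closedBall (0 : ℂ) 1).norm_image_sub_le_of_norm_deriv_le
      (fun z _ => hFd z) hder (x := 0) (y := (t : ℂ)) (by simp) (by simpa using ht)
    have h0 := hFt 0
    simp only [Complex.ofReal_zero, zero_smul, add_zero] at h0
    rw [hFt, h0, sub_zero, Complex.norm_real, Real.norm_eq_abs] at this
    refine this.trans ?_
    gcongr
    linarith
  · calc ‖f (x + t • u) - f x‖ ≤ ‖f (x + t • u)‖ + ‖f x‖ := norm_sub_le _ _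
      _ ≤ 2 * B * 1 := by linarith [hB (x + t • u), hB x]
      _ ≤ (L + 2) * B * |t| := by
        gcongr
        linarith

/-- Bernstein's inequality, with an unspecified constant. -/
theorem exists_lipschitz {Ω : Set V} (hΩ : IsCompact Ω) :
    ∃ L : ℝ, 0 ≤ L ∧ ∀ f, MemBernstein Ω f → ∀ B, (∀ x, ‖f x‖ ≤ B) → ∀ x y,
      ‖f x - f y‖ ≤ L * B * ‖x - y‖ := by
  set b := stdOrthonormalBasis ℝ V
  choose L hL0 hL using fun i => exists_directional_lipschitz hΩ (b i) (b.norm_eq_one i).le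
  refine ⟨∑ i, L i, Finset.sum_nonneg fun i _ => hL0 i, fun f hf B hB x y => ?_⟩
  have hB0 : 0 ≤ B := (norm_nonneg _).trans (hB 0)
  have key : ∀ s : Finset (Fin (Module.finrank ℝ V)),
      ‖f (y + ∑ i ∈ s, b.repr (x - y) i • b i) - f y‖ ≤ (∑ i ∈ s, L i) * B * ‖x - y‖ := by
    intro s
    induction s using Finset.induction_on with
    | empty => simp
    | insert i s hi ih =>
      rw [Finset.sum_insert hi, Finset.sum_insert hi]
      have h1 := hL i f hf B hB (y + ∑ i ∈ s, b.repr (x - y) i • b i) (b.repr (x - y) i)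
      have h2 : |b.repr (x - y) i| ≤ ‖x - y‖ := by
        rw [b.repr_apply_apply]
        refine (abs_real_inner_le_norm _ _).trans ?_
        rw [b.norm_eq_one, one_mul]
      have h3 : y + (b.repr (x - y) i • b i + ∑ i ∈ s, b.repr (x - y) i • b i) =
          y + ∑ i ∈ s, b.repr (x - y) i • b i + b.repr (x - y) i • b i := by abel
      rw [h3]
      refine (norm_sub_le_norm_sub_add_norm_sub _ (f (y + ∑ i ∈ s, b.repr (x - y) i • b i)) _).trans
        ?_
      have h4 : L i * B * |b.repr (x - y) i| ≤ L i * B * ‖x - y‖ :=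
        mul_le_mul_of_nonneg_left h2 (mul_nonneg (hL0 i) hB0)
      linarith
  have h := key Finset.univ
  rw [b.sum_repr, add_sub_cancel] at h
  exact h

section Density

variable {Λ : Set ℝ}

theorem ncard_inter_closedBall_le {δ : ℝ} (hδ : 0 < δ)
    (hΛ : ∀ x ∈ Λ, ∀ y ∈ Λ, x ≠ y → δ ≤ dist x y) (x r : ℝ) :
    (Λ ∩ closedBall x r).Finite ∧ (Λ ∩ closedBall x r).ncard ≤ ⌊2 * r / δ⌋₊ + 1 := by
  set f : ℝ → ℕ := fun y => ⌊(y - (x - r)) / δ⌋₊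
  have hmem : ∀ y ∈ Λ ∩ closedBall x r, 0 ≤ y - (x - r) ∧ y - (x - r) ≤ 2 * r := by
    rintro y ⟨-, hy⟩
    rw [mem_closedBall, Real.dist_eq, abs_le] at hy
    constructor <;> linarith
  have hmaps : ∀ y ∈ Λ ∩ closedBall x r, f y ∈ (Finset.range (⌊2 * r / δ⌋₊ + 1) : Set ℕ) := by
    intro y hy
    rw [Finset.mem_coe, Finset.mem_range, Nat.lt_succ_iff]
    exact Nat.floor_le_floor (div_le_div_of_nonneg_right (hmem y hy).2 hδ.le)
  have hlt : ∀ y ∈ Λ ∩ closedBall x r, ∀ z ∈ Λ ∩ closedBall x r, y < z → f y ≠ f z := by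
    intro y hy z hz hyz
    have h1 := hΛ z hz.1 y hy.1 hyz.ne'
    rw [Real.dist_eq, abs_of_pos (by linarith)] at h1
    refine (Nat.lt_of_lt_of_le (Nat.lt_succ_self _) ?_).ne
    rw [Nat.succ_eq_add_one, ← Nat.floor_add_one (div_nonneg (hmem y hy).1 hδ.le)]
    refine Nat.floor_le_floor ?_
    rw [← sub_nonneg]
    have : (z - (x - r)) / δ - ((y - (x - r)) / δ + 1) = (z - y - δ) / δ := by
      field_simp
      ring
    rw [this]
    exact div_nonneg (by linarith) hδ.le
  have hinj : Set.InjOn f (Λ ∩ closedBall x r) := by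
    intro y hy z hz hyz
    rcases lt_trichotomy y z with h | h | h
    · exact absurd hyz (hlt y hy z hz h)
    · exact h
    · exact absurd hyz.symm (hlt z hz y hy h)
  refine ⟨Set.Finite.of_injOn hmaps hinj (Finset.finite_toSet _), ?_⟩
  have h := Set.ncard_le_ncard_of_injOn f hmaps hinj (Finset.finite_toSet _)
  rwa [Set.ncard_coe_finset, Finset.card_range] at h

theorem toReal_volume_closedBall {r : ℝ} (hr : 0 < r) (x : ℝ) :
    (volume (closedBall x r)).toReal = 2 * r := by
  rw [Real.volume_closedBall, ENNReal.toReal_ofReal (by positivity)]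

theorem bddBelow_density (r : ℝ) : BddBelow (Set.range fun x : ℝ =>
    (Nat.card ↥(Λ ∩ closedBall x r) : ℝ) / (volume (closedBall x r)).toReal) :=
  ⟨0, by rintro _ ⟨x, rfl⟩; positivity⟩

theorem isCoboundedUnder_density (hΛ : UniformlyDiscrete Λ) :
    IsCoboundedUnder (· ≥ ·) atTop (fun r : ℝ => ⨅ x : ℝ,
      (Nat.card ↥(Λ ∩ closedBall x r) : ℝ) / (volume (closedBall x r)).toReal) := by
  obtain ⟨δ, hδ, hΛ⟩ := hΛ
  refine IsBoundedUnder.isCoboundedUnder_ge ⟨1 / δ + 1, ?_⟩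
  rw [eventually_map]
  filter_upwards [eventually_ge_atTop (1 : ℝ)] with r hr
  refine (ciInf_le (bddBelow_density r) 0).trans ?_
  rw [toReal_volume_closedBall (by linarith), div_le_iff₀ (by linarith)]
  have h1 : (Nat.card ↥(Λ ∩ closedBall 0 r) : ℝ) ≤ (⌊2 * r / δ⌋₊ + 1 : ℕ) := by
    exact_mod_cast (ncard_inter_closedBall_le hδ hΛ 0 r).2
  push_cast at h1
  have h2 := Nat.floor_le (a := 2 * r / δ) (by positivity)
  have h3 : (1 / δ + 1) * (2 * r) = 2 * r / δ + 2 * r := by field_simp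
  rw [h3]
  linarith

theorem lowerUniformDensity_nonneg (hΛ : UniformlyDiscrete Λ) : 0 ≤ lowerUniformDensity Λ := by
  refine le_liminf_of_le (isCoboundedUnder_density hΛ) (Eventually.of_forall fun r => ?_)
  exact Real.iInf_nonneg fun x => by positivity

theorem eventually_mul_le_ncard {c : ℝ} (hc : c < lowerUniformDensity Λ) :
    ∀ᶠ r : ℝ in atTop, ∀ x, c * (2 * r) ≤ (Λ ∩ closedBall x r).ncard := by
  have h := eventually_lt_of_lt_liminf hc
    ⟨0, eventually_map.2 (Eventually.of_forall fun r => Real.iInf_nonneg fun x => by positivity)⟩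
  filter_upwards [h, eventually_gt_atTop (0 : ℝ)] with r hr hr0 x
  have h1 := hr.trans_le (ciInf_le (bddBelow_density r) x)
  rw [toReal_volume_closedBall hr0, lt_div_iff₀ (by linarith)] at h1
  exact h1.le

theorem frequently_exists_ncard_lt (hΛ : UniformlyDiscrete Λ) {c : ℝ}
    (hc : lowerUniformDensity Λ < c) :
    ∃ᶠ r : ℝ in atTop, ∃ x, ((Λ ∩ closedBall x r).ncard : ℝ) < c * (2 * r) := by
  have h := frequently_lt_of_liminf_lt (isCoboundedUnder_density hΛ) hc
  refine (h.and_eventually (eventually_gt_atTop (0 : ℝ))).mono fun r hr => ?_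
  obtain ⟨x, hx⟩ := exists_lt_of_ciInf_lt hr.1
  rw [toReal_volume_closedBall hr.2, div_lt_iff₀ (by linarith [hr.2])] at hx
  exact ⟨x, hx⟩

theorem exists_separation_symm {Q : Set ℝ} (hQpos : Q ⊆ Set.Ioi 0) (hQ : UniformlyDiscrete Q) :
    ∃ δ > 0, (∀ x ∈ Q ∪ -Q, ∀ y ∈ Q ∪ -Q, x ≠ y → δ ≤ dist x y) ∧ ∀ x ∈ Q ∪ -Q, δ ≤ |x| := by
  obtain ⟨δ, hδ, hsep⟩ := hQ
  have hinf : ∃ δ₀ > 0, ∀ q ∈ Q, δ₀ ≤ q := by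
    by_cases h : ∃ q ∈ Q, q < δ
    · obtain ⟨q, hq, hqδ⟩ := h
      refine ⟨q, hQpos hq, fun p hp => ?_⟩
      by_contra! hlt
      have := hsep q hq p hp hlt.ne'
      have hp0 : 0 < p := hQpos hp
      rw [Real.dist_eq, abs_of_pos (by linarith)] at this
      linarith
    · push Not at h
      exact ⟨δ, hδ, h⟩
  obtain ⟨δ₀, hδ₀, hle⟩ := hinf
  refine ⟨min δ δ₀, lt_min hδ hδ₀, ?_, ?_⟩
  · rintro x (hx | hx) y (hy | hy) hxy
    · exact (min_le_left _ _).trans (hsep x hx y hy hxy)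
    · refine (min_le_right _ _).trans ((hle x hx).trans ?_)
      have := hle _ hy
      rw [Real.dist_eq]
      exact le_trans (by linarith) (le_abs_self _)
    · refine (min_le_right _ _).trans ((hle y hy).trans ?_)
      have := hle _ hx
      rw [Real.dist_eq]
      exact le_trans (by linarith) (neg_le_abs _)
    · have := hsep _ hx _ hy (by simpa using hxy)
      rw [dist_neg_neg] at this
      exact (min_le_left _ _).trans this
  · rintro x (hx | hx)
    · exact (min_le_right _ _).trans ((hle x hx).trans (le_abs_self _))
    · exact (min_le_right _ _).trans ((hle _ hx).trans (neg_le_abs _))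

end Density

section Squares

/-- Membership in the union of dilated boundaries of the square `[-1, 1]²`. -/
theorem mem_dilated_frontier_iff {Q : Set ℝ} (hQ : Q ⊆ Set.Ioi 0)
    (x : EuclideanSpace ℝ (Fin 2)) :
    (∃ q ∈ Q, ∃ w ∈ frontier {x : EuclideanSpace ℝ (Fin 2) | ∀ i, x i ∈ Set.Icc (-1 : ℝ) 1},
      x = q • w) ↔ ‖(WithLp.ofLp x : Fin 2 → ℝ)‖ ∈ Q := by
  have hD : {x : EuclideanSpace ℝ (Fin 2) | ∀ i, x i ∈ Set.Icc (-1 : ℝ) 1} =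
      (PiLp.homeomorph 2 (fun _ : Fin 2 => ℝ)) ⁻¹' (closedBall 0 1) := by
    ext y
    rw [Set.mem_preimage, mem_closedBall_zero_iff, pi_norm_le_iff_of_nonneg zero_le_one]
    simp only [Set.mem_ofPred_eq, Set.mem_Icc, Real.norm_eq_abs, abs_le]
    rfl
  rw [hD, ← Homeomorph.preimage_frontier, frontier_closedBall _ one_ne_zero]
  constructor
  · rintro ⟨q, hq, w, hw, rfl⟩
    have hw' : ‖(WithLp.ofLp w : Fin 2 → ℝ)‖ = 1 := mem_sphere_zero_iff_norm.1 hw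
    rw [WithLp.ofLp_smul, norm_smul, hw', mul_one, Real.norm_of_nonneg (hQ hq).le]
    exact hq
  · intro h
    have h0 : 0 < ‖(WithLp.ofLp x : Fin 2 → ℝ)‖ := hQ h
    refine ⟨_, h, ‖(WithLp.ofLp x : Fin 2 → ℝ)‖⁻¹ • x, ?_, ?_⟩
    · rw [Set.mem_preimage, mem_sphere_zero_iff_norm]
      change ‖WithLp.ofLp (‖(WithLp.ofLp x : Fin 2 → ℝ)‖⁻¹ • x)‖ = 1
      rw [WithLp.ofLp_smul, norm_smul, norm_inv, norm_norm, inv_mul_cancel₀ h0.ne']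
    · rw [smul_smul, mul_inv_cancel₀ h0.ne', one_smul]

theorem norm_ofLp_eq_abs {i j : Fin 2} (hij : i ≠ j) (x : EuclideanSpace ℝ (Fin 2))
    (h : |x j| ≤ |x i|) : ‖(WithLp.ofLp x : Fin 2 → ℝ)‖ = |x i| := by
  refine le_antisymm ((pi_norm_le_iff_of_nonneg (abs_nonneg _)).2 fun k => ?_)
    (norm_le_pi_norm (WithLp.ofLp x) i)
  have : k = i ∨ k = j := by omega
  rcases this with rfl | rfl
  · exact le_rfl
  · exact h

theorem eq_smul_single_add {i j : Fin 2} (hij : i ≠ j) (x : EuclideanSpace ℝ (Fin 2)) :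
    x = x i • EuclideanSpace.single i (1 : ℝ) + x j • EuclideanSpace.single j (1 : ℝ) := by
  ext k
  have : k = i ∨ k = j := by omega
  rcases this with rfl | rfl
  · simp [hij]
  · simp [hij.symm]

end Squares

theorem MemBernstein.comp_add_right {Ω : Set V} {f : V → ℂ} (hf : MemBernstein Ω f) (v : V) :
    MemBernstein Ω (fun x => f (x + v)) := by
  obtain ⟨hc, ⟨B, hB⟩, hv⟩ := hf
  refine ⟨hc.comp (continuous_id.add continuous_const), ⟨B, fun x => hB _⟩, fun ψ h1 h2 h3 => ?_⟩
  have h4 := hv _ (h1.mul (contDiff_cexp_inner v)) h2.mul_right ?_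
  · rw [← h4, ← integral_add_right_eq_self (fun x => f x * _) v]
    refine integral_congr_ae (Eventually.of_forall fun x => ?_)
    have := fourier_mul_cexp_inner ψ v (x + v)
    rw [add_sub_cancel_right] at this
    simp only [← this]
  · rw [Set.eq_empty_iff_forall_notMem] at h3 ⊢
    rintro ξ ⟨hξ1, hξ2⟩
    exact h3 ξ ⟨tsupport_mul_subset_left hξ1, hξ2⟩

theorem MemBernstein.const_mul {Ω : Set V} {f : V → ℂ} (hf : MemBernstein Ω f) (c : ℂ) :
    MemBernstein Ω (fun x => c * f x) := by
  obtain ⟨hc, ⟨B, hB⟩, hv⟩ := hf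
  refine ⟨continuous_const.mul hc, ⟨‖c‖ * B, fun x => ?_⟩, fun ψ h1 h2 h3 => ?_⟩
  · rw [norm_mul]
    exact mul_le_mul_of_nonneg_left (hB x) (norm_nonneg c)
  · simp only [mul_assoc]
    rw [integral_const_mul, hv ψ h1 h2 h3, mul_zero]

/-- Bernstein spaces are closed under bounded pointwise limits. -/
theorem MemBernstein.of_tendsto {Ω : Set V} {h : ℕ → V → ℂ} {g : V → ℂ}
    (hh : ∀ n, MemBernstein Ω (h n)) {B : ℝ} (hB : ∀ n x, ‖h n x‖ ≤ B) (hg : Continuous g)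
    (hlim : ∀ x, Tendsto (fun n => h n x) atTop (nhds (g x))) : MemBernstein Ω g := by
  refine ⟨hg, ⟨B, fun x => le_of_tendsto (hlim x).norm (Eventually.of_forall fun n => hB n x)⟩,
    fun ψ h1 h2 h3 => ?_⟩
  have hl : Tendsto (fun n => ∫ x, h n x * 𝓕 ψ x) atTop (nhds (∫ x, g x * 𝓕 ψ x)) := by
    refine tendsto_integral_of_dominated_convergence (fun y => B * ‖𝓕 ψ y‖) (fun n => ?_)
      ((integrable_fourier_of_contDiff h1 h2).norm.const_mul B) (fun n => ?_) ?_
    · exact ((hh n).1.mul (continuous_fourier_of_contDiff h1 h2)).aestronglyMeasurable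
    · refine Eventually.of_forall fun y => ?_
      rw [norm_mul]
      exact mul_le_mul_of_nonneg_right (hB n y) (norm_nonneg _)
    · exact Eventually.of_forall fun y => (hlim y).mul_const _
  simp only [fun n => (hh n).2.2 ψ h1 h2 h3] at hl
  exact tendsto_nhds_unique hl tendsto_const_nhds

/-- Compactness of the unit ball of a Bernstein space for pointwise convergence. -/
theorem exists_subseq_tendsto_memBernstein {Ω : Set V} (hΩ : IsCompact Ω) {h : ℕ → V → ℂ}
    (hh : ∀ n, MemBernstein Ω (h n)) {B : ℝ} (hB : ∀ n x, ‖h n x‖ ≤ B) :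
    ∃ (φ : ℕ → ℕ) (g : V → ℂ), StrictMono φ ∧ MemBernstein Ω g ∧
      ∀ x, Tendsto (fun n => h (φ n) x) atTop (nhds (g x)) := by
  obtain ⟨L, hL0, hL⟩ := exists_lipschitz hΩ
  have hB0 : 0 ≤ B := (norm_nonneg _).trans (hB 0 0)
  have hlip : ∀ n x y, ‖h n x - h n y‖ ≤ L * B * ‖x - y‖ := fun n => hL _ (hh n) B (hB n)
  set D := TopologicalSpace.denseSeq V
  have hcomp : IsCompact (Set.pi Set.univ (fun _ : ℕ => closedBall (0 : ℂ) B)) :=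
    isCompact_univ_pi fun _ => isCompact_closedBall _ _
  obtain ⟨w, -, φ, hφ, hw⟩ := hcomp.tendsto_subseq (x := fun n k => h n (D k))
    (fun n k _ => by simpa using hB n (D k))
  have hwk : ∀ k, Tendsto (fun n => h (φ n) (D k)) atTop (nhds (w k)) := tendsto_pi_nhds.1 hw
  have hcauchy : ∀ x, CauchySeq (fun n => h (φ n) x) := by
    intro x
    rw [Metric.cauchySeq_iff']
    intro ε hε
    obtain ⟨k, hk⟩ := (TopologicalSpace.denseRange_denseSeq V).exists_dist_lt x
      (show 0 < ε / (4 * (L * B + 1)) by positivity)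
    obtain ⟨N, hN⟩ := Metric.cauchySeq_iff'.1 (hwk k).cauchySeq (ε / 2) (by positivity)
    refine ⟨N, fun n hn => ?_⟩
    have h1 : ∀ n, ‖h n x - h n (D k)‖ ≤ ε / 4 := by
      intro n
      refine (hlip n x (D k)).trans ?_
      rw [dist_eq_norm, lt_div_iff₀ (by positivity)] at hk
      have hk' : 0 ≤ ‖x - D k‖ := norm_nonneg _
      linarith
    have h2 := hN n hn
    rw [dist_eq_norm] at h2 ⊢
    calc ‖h (φ n) x - h (φ N) x‖ = ‖(h (φ n) x - h (φ n) (D k)) +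
          (h (φ n) (D k) - h (φ N) (D k)) - (h (φ N) x - h (φ N) (D k))‖ := by congr 1; ring
      _ ≤ ‖h (φ n) x - h (φ n) (D k)‖ + ‖h (φ n) (D k) - h (φ N) (D k)‖ +
          ‖h (φ N) x - h (φ N) (D k)‖ := (norm_sub_le _ _).trans (by gcongr; exact norm_add_le _ _)
      _ < ε := by linarith [h1 (φ n), h1 (φ N)]
  choose g hg using fun x => cauchySeq_tendsto_of_complete (hcauchy x)
  have hgc : Continuous g := by
    have : LipschitzWith (L * B).toNNReal g := by
      refine LipschitzWith.of_dist_le_mul fun x y => ?_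
      rw [dist_eq_norm, dist_eq_norm, Real.coe_toNNReal _ (by positivity)]
      exact le_of_tendsto ((hg x).sub (hg y)).norm (Eventually.of_forall fun n => hlip _ _ _)
    exact this.continuous
  exact ⟨φ, g, hφ, MemBernstein.of_tendsto (fun n => hh (φ n)) (fun n => hB (φ n)) hgc hg, hg⟩

/-- A point outside the difference body is separated from it by a direction of small width. -/
theorem exists_width_lt {Ω : Set V} (hc : IsCompact Ω) (hconv : Convex ℝ Ω) (hne : Ω.Nonempty)
    {e : V} {d : ℝ} (hd : 0 ≤ d) (he : d • e ∉ Ω - Ω) :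
    ∃ (u : V) (a w : ℝ), 0 < w ∧ w < d ∧ ⟪u, e⟫ = 1 ∧ ∀ ξ ∈ Ω, |⟪u, ξ⟫ - a| < w / 2 := by
  obtain ⟨f, s, hf1, hf2⟩ := geometric_hahn_banach_closed_point (hconv.sub hconv)
    (sub_eq_add_neg Ω Ω ▸ hc.add hc.neg).isClosed he
  set v := (InnerProductSpace.toDual ℝ V).symm f
  have hv : ∀ x, f x = ⟪v, x⟫ := fun x => by simp [v]
  obtain ⟨ξ₀, hξ₀⟩ := hne
  have hs0 : 0 < s := by
    have := hf1 (ξ₀ - ξ₀) (Set.sub_mem_sub hξ₀ hξ₀)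
    simpa using this
  rw [map_smul, smul_eq_mul] at hf2
  have hve : 0 < f e := by
    by_contra! h
    linarith [mul_nonpos_of_nonneg_of_nonpos hd h]
  set u := (f e)⁻¹ • v
  have hu : ∀ x, ⟪u, x⟫ = (f e)⁻¹ * f x := fun x => by
    rw [hv x, real_inner_smul_left]
  obtain ⟨ξ₁, hξ₁, hmax⟩ := hc.exists_isMaxOn ⟨ξ₀, hξ₀⟩ (f := fun ξ => ⟪u, ξ⟫) (by fun_prop)
  obtain ⟨ξ₂, hξ₂, hmin⟩ := hc.exists_isMinOn ⟨ξ₀, hξ₀⟩ (f := fun ξ => ⟪u, ξ⟫) (by fun_prop)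
  have hlt : ⟪u, ξ₁⟫ - ⟪u, ξ₂⟫ < (f e)⁻¹ * s := by
    rw [← inner_sub_right, hu]
    exact mul_lt_mul_of_pos_left (hf1 _ (Set.sub_mem_sub hξ₁ hξ₂)) (inv_pos.2 hve)
  refine ⟨u, (⟪u, ξ₁⟫ + ⟪u, ξ₂⟫) / 2, (f e)⁻¹ * s, by positivity, ?_, ?_, fun ξ hξ => ?_⟩
  · rw [inv_mul_lt_iff₀ hve]
    linarith
  · rw [hu, inv_mul_cancel₀ hve.ne']
  · have h1 : ⟪u, ξ⟫ ≤ ⟪u, ξ₁⟫ := hmax hξ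
    have h2 : ⟪u, ξ₂⟫ ≤ ⟪u, ξ⟫ := hmin hξ
    rw [abs_lt]
    constructor <;> linarith

section Plane

local notation "E" => EuclideanSpace ℝ (Fin 2)

theorem norm_ofLp_mem {Q : Set ℝ} (hQpos : Q ⊆ Set.Ioi 0) {i j : Fin 2} (hij : i ≠ j) {p : E}
    (h1 : p i ∈ Q ∪ -Q) (h2 : |p j| ≤ |p i|) : ‖(WithLp.ofLp p : Fin 2 → ℝ)‖ ∈ Q := by
  rw [norm_ofLp_eq_abs hij p h2]
  rcases h1 with h | h
  · rwa [abs_of_pos (hQpos h)]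
  · have h' : 0 < -p i := hQpos h
    rwa [abs_of_neg (by linarith)]

/-- A clamped shift moves `y` well inside an interval whose half-length is almost `|y|`. -/
theorem exists_shift {y A R δ : ℝ} (hR : 0 ≤ R) (hδ : 0 < δ) (hA : δ ≤ A) (hy : |y| ≤ A + R) :
    ∃ t ∈ Set.Icc (-(R + δ)) (R + δ), |y + t| ≤ A - δ := by
  rw [abs_le] at hy
  rcases le_total 0 y with h | h
  · refine ⟨-min y (R + δ), ⟨?_, ?_⟩, ?_⟩
    · linarith [min_le_right y (R + δ)]
    · have : 0 ≤ min y (R + δ) := le_min h (by linarith)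
      linarith
    · rcases min_cases y (R + δ) with ⟨h1, h2⟩ | ⟨h1, h2⟩ <;> rw [h1, abs_le] <;>
        constructor <;> linarith
  · refine ⟨min (-y) (R + δ), ⟨?_, ?_⟩, ?_⟩
    · have : 0 ≤ min (-y) (R + δ) := le_min (by linarith) (by linarith)
      linarith
    · exact min_le_right _ _
    · rcases min_cases (-y) (R + δ) with ⟨h1, h2⟩ | ⟨h1, h2⟩ <;> rw [h1, abs_le] <;>
        constructor <;> linarith

/-- Limits of translates of functions which become small on the dilated squares vanish on many
lines. -/
theorem exists_zero_lines {Ω : Set E} (hΩ : IsCompact Ω) {Q : Set ℝ} (hQpos : Q ⊆ Set.Ioi 0)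
    {δ : ℝ} (hδ : 0 < δ) (hsep : ∀ x ∈ Q ∪ -Q, ∀ y ∈ Q ∪ -Q, x ≠ y → δ ≤ dist x y)
    (hinf : ∀ x ∈ Q ∪ -Q, δ ≤ |x|) {i j : Fin 2} (hij : i ≠ j) {f : ℕ → E → ℂ} {x : ℕ → E}
    (hx : ∀ n, |x n j| ≤ |x n i|) {ε : ℕ → ℝ} (hε : Tendsto ε atTop (nhds 0))
    (hf : ∀ n p, ‖(WithLp.ofLp p : Fin 2 → ℝ)‖ ∈ Q → ‖f n p‖ ≤ ε n) {g : E → ℂ}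
    (hg : MemBernstein Ω g)
    (hlim : ∀ z : E, Tendsto (fun n => f n (z + x n)) atTop (nhds (g z)))
    {L : ℝ} (hL : ∀ n p q, ‖f n p - f n q‖ ≤ L * ‖p - q‖)
    {r : ℝ} {m : ℕ} (hm : ∀ c, m ≤ ((Q ∪ -Q) ∩ closedBall c r).ncard) (c : ℝ) :
    ∃ T : Finset ℝ, T.card = m ∧ (T : Set ℝ) ⊆
      {l : ℝ | ∀ s : ℝ, g (l • EuclideanSpace.single i 1 + s • EuclideanSpace.single j 1) = 0} ∩
        Set.Icc (c - r) (c + r) := by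
  rcases Nat.eq_zero_or_pos m with rfl | hm0
  · exact ⟨∅, by simp⟩
  have hr : 0 ≤ r := by
    by_contra! h
    have := hm 0
    rw [closedBall_eq_empty.2 h, Set.inter_empty, Set.ncard_empty] at this
    omega
  set R := |c| + r
  have hR : 0 ≤ R := by positivity
  have hpts : ∀ n, ∃ w : Fin m → ℝ × ℝ,
      (∀ k, w k ∈ Set.Icc (c - r) (c + r) ×ˢ Set.Icc (-(R + δ)) (R + δ)) ∧
      (∀ k l, k ≠ l → δ ≤ dist (w k).1 (w l).1) ∧
      (∀ k, x n i + (w k).1 ∈ Q ∪ -Q) ∧ ∀ k, |x n j + (w k).2| ≤ |x n i + (w k).1| - δ := by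
    intro n
    obtain ⟨t, ht, htc⟩ := Set.exists_subset_card_eq (hm (x n i + c))
    have htf : t.Finite := Set.finite_of_ncard_pos (by omega)
    set e := htf.toFinset.equivFinOfCardEq (n := m) (by
      rw [← htc, Set.ncard_eq_toFinset_card t htf])
    have hmem : ∀ k, ((e.symm k : ℝ)) ∈ (Q ∪ -Q) ∩ closedBall (x n i + c) r := fun k =>
      ht (htf.mem_toFinset.1 (e.symm k).2)
    have hball : ∀ k, |(e.symm k : ℝ) - x n i - c| ≤ r := by
      intro k
      have := (hmem k).2
      rw [mem_closedBall, Real.dist_eq] at this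
      rwa [sub_sub]
    have hsh : ∀ k, ∃ s ∈ Set.Icc (-(R + δ)) (R + δ), |x n j + s| ≤ |(e.symm k : ℝ)| - δ := by
      intro k
      refine exists_shift hR hδ (hinf _ (hmem k).1) ((hx n).trans ?_)
      calc |x n i| = |(e.symm k : ℝ) + (-((e.symm k : ℝ) - x n i - c)) + (-c)| := by
            congr 1; ring
        _ ≤ |(e.symm k : ℝ)| + |-((e.symm k : ℝ) - x n i - c)| + |(-c)| := abs_add_three _ _ _
        _ ≤ |(e.symm k : ℝ)| + R := by
          rw [abs_neg, abs_neg]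
          have := hball k
          simp only [R]
          linarith
    choose s hs1 hs2 using hsh
    refine ⟨fun k => ((e.symm k : ℝ) - x n i, s k), fun k => ⟨?_, hs1 k⟩, fun k l hkl => ?_,
      fun k => ?_, fun k => ?_⟩
    · have := abs_le.1 (hball k)
      constructor <;> simp only <;> linarith
    · rw [dist_sub_right]
      exact hsep _ (hmem k).1 _ (hmem l).1 fun h => hkl (e.symm.injective (Subtype.ext h))
    · simp only [add_sub_cancel]
      exact (hmem k).1
    · simp only [add_sub_cancel]
      exact hs2 k
  choose w hw1 hw2 hw3 hw4 using hpts
  have hcomp : IsCompact (Set.pi Set.univ (fun _ : Fin m =>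
      Set.Icc (c - r) (c + r) ×ˢ Set.Icc (-(R + δ)) (R + δ))) :=
    isCompact_univ_pi fun _ => isCompact_Icc.prod isCompact_Icc
  obtain ⟨v, hv, φ, hφ, hvlim⟩ := hcomp.tendsto_subseq (x := w) fun n k _ => hw1 n k
  have hv1 : ∀ k, Tendsto (fun n => (w (φ n) k).1) atTop (nhds (v k).1) := fun k =>
    (continuous_fst.tendsto _).comp ((tendsto_pi_nhds.1 hvlim) k)
  have hv2 : ∀ k, Tendsto (fun n => (w (φ n) k).2) atTop (nhds (v k).2) := fun k =>
    (continuous_snd.tendsto _).comp ((tendsto_pi_nhds.1 hvlim) k)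
  have hinj : Function.Injective (fun k => (v k).1) := by
    intro k l hkl
    by_contra hne
    have h1 := (hv1 k).dist (hv1 l)
    simp only [] at hkl
    rw [hkl, dist_self] at h1
    have := ge_of_tendsto h1 (Eventually.of_forall fun n => hw2 (φ n) k l hne)
    linarith
  refine ⟨Finset.univ.image fun k => (v k).1, ?_, ?_⟩
  · rw [Finset.card_image_of_injective _ hinj, Finset.card_univ, Fintype.card_fin]
  · intro l hl
    obtain ⟨k, -, rfl⟩ := Finset.mem_image.1 (Finset.mem_coe.1 hl)
    refine ⟨fun s => ?_, (hv k (Set.mem_univ k)).1⟩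
    refine hg.eq_zero_of_segment hΩ _ _ (t₀ := (v k).2) ?_ s
    filter_upwards [Metric.ball_mem_nhds (v k).2 hδ] with s hs
    rw [mem_ball, Real.dist_eq] at hs
    set ei : E := EuclideanSpace.single i 1
    set ej : E := EuclideanSpace.single j 1
    set z : E := (v k).1 • ei + s • ej
    set y : ℕ → E := fun n => (w n k).1 • ei + ((w n k).2 + (s - (v k).2)) • ej
    have hyz : Tendsto (fun n => y (φ n)) atTop (nhds z) := by
      have h1 := ((hv1 k).smul_const ei).add (((hv2 k).add_const (s - (v k).2)).smul_const ej)
      rwa [add_sub_cancel] at h1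
    have hmemP : ∀ n, ‖(WithLp.ofLp (y n + x n) : Fin 2 → ℝ)‖ ∈ Q := by
      intro n
      have hi : (y n + x n) i = x n i + (w n k).1 := by
        simp [y, ei, ej, hij, add_comm]
      have hj : (y n + x n) j = x n j + (w n k).2 + (s - (v k).2) := by
        simp [y, ei, ej, hij.symm]
        ring
      refine norm_ofLp_mem hQpos hij ?_ ?_
      · rw [hi]
        exact hw3 n k
      · rw [hi, hj]
        refine (abs_add_le _ _).trans ?_
        linarith [hw4 n k]
    have hbound : ∀ n, ‖f (φ n) (z + x (φ n))‖ ≤ ε (φ n) + L * ‖z - y (φ n)‖ := by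
      intro n
      have h1 := hf (φ n) _ (hmemP (φ n))
      have h2 := hL (φ n) (z + x (φ n)) (y (φ n) + x (φ n))
      rw [add_sub_add_right_eq_sub] at h2
      have h3 := norm_le_norm_add_norm_sub' (f (φ n) (z + x (φ n)))
        (f (φ n) (y (φ n) + x (φ n)))
      linarith
    have h0 : Tendsto (fun n => ε (φ n) + L * ‖z - y (φ n)‖) atTop (nhds 0) := by
      have h1 := (hε.comp hφ.tendsto_atTop).add
        (((tendsto_const_nhds (x := z)).sub hyz).norm.const_mul L)
      simpa using h1
    exact tendsto_nhds_unique ((hlim z).comp hφ.tendsto_atTop)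
      (squeeze_zero_norm hbound h0)

end Plane

section Sufficiency

local notation "E" => EuclideanSpace ℝ (Fin 2)

theorem exists_large_value_on_squares {Ω : Set E} (hΩ : IsCompact Ω) (hconv : Convex ℝ Ω)
    (hne : Ω.Nonempty) {Q : Set ℝ} (hQpos : Q ⊆ Set.Ioi 0) (hQ : UniformlyDiscrete Q)
    {i j : Fin 2} (hij : i ≠ j)
    (hd : lowerUniformDensity (Q ∪ -Q) • EuclideanSpace.single i (1 : ℝ) ∉ Ω - Ω) :
    ∃ η > 0, ∀ f, MemBernstein Ω f → (∀ x, ‖f x‖ ≤ 1) → ∀ x : E, |x j| ≤ |x i| →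
      1 / 2 ≤ ‖f x‖ → ∃ p : E, ‖(WithLp.ofLp p : Fin 2 → ℝ)‖ ∈ Q ∧ η < ‖f p‖ := by
  by_contra! H
  obtain ⟨δ, hδ, hsep, hinf⟩ := exists_separation_symm hQpos hQ
  set d := lowerUniformDensity (Q ∪ -Q)
  have hd0 : 0 ≤ d := lowerUniformDensity_nonneg ⟨δ, hδ, hsep⟩
  obtain ⟨u, a, w, hw0, hwd, hue, hua⟩ := exists_width_lt hΩ hconv hne hd0 hd
  have hui : u i = 1 := by
    simpa [EuclideanSpace.inner_single_right] using hue
  choose f hf hf1 x hx hfx hfP using fun n : ℕ =>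
    H (1 / ((n : ℝ) + 1)) Nat.one_div_pos_of_nat
  obtain ⟨φ, g, hφ, hg, hlim⟩ := exists_subseq_tendsto_memBernstein hΩ
    (h := fun n z => f n (z + x n)) (fun n => (hf n).comp_add_right (x n)) (B := 1)
    (fun n z => hf1 n _)
  obtain ⟨L, -, hL⟩ := exists_lipschitz hΩ
  have hL' : ∀ n p q, ‖f n p - f n q‖ ≤ L * 1 * ‖p - q‖ := fun n => hL (f n) (hf n) 1 (hf1 n)
  have hg0 : 1 / 2 ≤ ‖g 0‖ := by
    refine ge_of_tendsto (hlim 0).norm (Eventually.of_forall fun n => ?_)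
    simpa using hfx (φ n)
  obtain ⟨r, hrdens, hr0⟩ := ((eventually_mul_le_ncard (Λ := Q ∪ -Q) (c := (d + w) / 2)
    (by linarith : (d + w) / 2 < d)).and (eventually_gt_atTop (0 : ℝ))).exists
  set m := ⌈(d + w) / 2 * (2 * r)⌉₊ with hm
  have hmle : ∀ c, m ≤ ((Q ∪ -Q) ∩ closedBall c r).ncard := fun c =>
    Nat.ceil_le.2 (hrdens c)
  have hmge : (d + w) / 2 * (2 * r) ≤ m := Nat.le_ceil _
  have hzero := exists_zero_lines hΩ hQpos hδ hsep hinf hij (fun n => hx (φ n))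
    (tendsto_one_div_add_atTop_nhds_zero_nat.comp hφ.tendsto_atTop)
    (fun n => hfP (φ n)) hg hlim (fun n => hL' (φ n)) hmle
  obtain ⟨C, M, hC0, hC⟩ := exists_entire_extension hΩ u hua
  obtain ⟨B, hB⟩ := hg.2.1
  obtain ⟨F, hFd, hFt, hFb⟩ := hC g hg B hB 0
  have hF0 : F 0 = 0 := by
    refine apply_zero_eq_zero_of_dense_zeros hFd (C := B * C) (τ := w)
      (b := 2 * r * (1 + (d - w) / (4 * w))) (r := r) (M := M) (m := m) hw0 hr0 ?_ ?_ hFb ?_ hzero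
    · have : 0 < (d - w) / (4 * w) := div_pos (by linarith) (by linarith)
      nlinarith
    · have : w * (2 * r * (1 + (d - w) / (4 * w))) = 2 * r * (w + (d - w) / 4) := by
        field_simp
      rw [this]
      nlinarith
    · intro l hl
      rw [hFt, zero_add]
      have h1 : l • u = l • EuclideanSpace.single i 1 + (l * u j) • EuclideanSpace.single j 1 := by
        conv_lhs => rw [eq_smul_single_add hij u, hui]
        rw [smul_add, smul_smul, smul_smul, mul_one]
      rw [h1, hl (l * u j), mul_zero]
  have h1 := hFt 0
  rw [Complex.ofReal_zero, hF0] at h1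
  simp only [zero_smul, add_zero, mul_zero, zero_mul, neg_zero, Complex.exp_zero, one_mul] at h1
  rw [← h1, norm_zero] at hg0
  linarith

theorem isSamplingSet_of_notMem {Ω : Set E} (hΩ : IsCompact Ω) (hconv : Convex ℝ Ω)
    (hne : Ω.Nonempty) {Q : Set ℝ} (hQpos : Q ⊆ Set.Ioi 0) (hQ : UniformlyDiscrete Q)
    (hd : ∀ i, lowerUniformDensity (Q ∪ -Q) • EuclideanSpace.single i (1 : ℝ) ∉ Ω - Ω) :
    IsSamplingSet Ω {p : E | ‖(WithLp.ofLp p : Fin 2 → ℝ)‖ ∈ Q} := by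
  obtain ⟨η₀, h₀, H₀⟩ := exists_large_value_on_squares hΩ hconv hne hQpos hQ
    (i := 0) (j := 1) (by decide) (hd 0)
  obtain ⟨η₁, h₁, H₁⟩ := exists_large_value_on_squares hΩ hconv hne hQpos hQ
    (i := 1) (j := 0) (by decide) (hd 1)
  set η := min η₀ η₁
  have hη : 0 < η := lt_min h₀ h₁
  refine ⟨η⁻¹, inv_pos.2 hη, fun f hf x => ?_⟩
  obtain ⟨B, hB⟩ := hf.2.1
  have hbdd : BddAbove (Set.range fun x => ‖f x‖) := ⟨B, by rintro _ ⟨y, rfl⟩; exact hB y⟩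
  set A := ⨆ x, ‖f x‖
  have hA : ∀ x, ‖f x‖ ≤ A := fun x => le_ciSup hbdd x
  rcases eq_or_lt_of_le ((norm_nonneg _).trans (hA x)) with hA0 | hA0
  · have h2 := hA x
    rw [← hA0] at h2
    refine h2.trans (mul_nonneg (inv_pos.2 hη).le (Real.sSup_nonneg ?_))
    rintro _ ⟨p, -, rfl⟩
    exact norm_nonneg _
  obtain ⟨x₀, hx₀⟩ := exists_lt_of_lt_ciSup (show A / 2 < A by linarith)
  have hg := hf.const_mul (A⁻¹ : ℝ)
  have hnorm : ∀ y, ‖((A⁻¹ : ℝ) : ℂ) * f y‖ = A⁻¹ * ‖f y‖ := fun y => by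
    rw [norm_mul, Complex.norm_real, Real.norm_of_nonneg (inv_pos.2 hA0).le]
  have hg1 : ∀ y, ‖((A⁻¹ : ℝ) : ℂ) * f y‖ ≤ 1 := fun y => by
    rw [hnorm, inv_mul_le_iff₀ hA0, mul_one]
    exact hA y
  have hgx : 1 / 2 ≤ ‖((A⁻¹ : ℝ) : ℂ) * f x₀‖ := by
    rw [hnorm, le_inv_mul_iff₀ hA0]
    linarith
  have hex : ∃ p : E, ‖(WithLp.ofLp p : Fin 2 → ℝ)‖ ∈ Q ∧ η < ‖((A⁻¹ : ℝ) : ℂ) * f p‖ := by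
    rcases le_total |x₀ 1| |x₀ 0| with h | h
    · obtain ⟨p, hp1, hp2⟩ := H₀ _ hg hg1 x₀ h hgx
      exact ⟨p, hp1, (min_le_left _ _).trans_lt hp2⟩
    · obtain ⟨p, hp1, hp2⟩ := H₁ _ hg hg1 x₀ h hgx
      exact ⟨p, hp1, (min_le_right _ _).trans_lt hp2⟩
  obtain ⟨p, hp1, hp2⟩ := hex
  rw [hnorm, lt_inv_mul_iff₀ hA0] at hp2
  have hsup : ‖f p‖ ≤ sSup ((fun p => ‖f p‖) '' {p : E | ‖(WithLp.ofLp p : Fin 2 → ℝ)‖ ∈ Q}) :=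
    le_csSup ⟨B, by rintro _ ⟨y, -, rfl⟩; exact hB y⟩ ⟨p, hp1, rfl⟩
  rw [le_inv_mul_iff₀ hη]
  refine le_trans ?_ hsup
  have := mul_le_mul_of_nonneg_left (hA x) hη.le
  linarith

end Sufficiency

/-- The character of frequency `ξ`. -/
def character (ξ x : V) : ℂ := Complex.exp (2 * Real.pi * Complex.I * (⟪ξ, x⟫ : ℝ))

theorem norm_character (ξ x : V) : ‖character ξ x‖ = 1 := by
  rw [character, show (2 * Real.pi * Complex.I * (⟪ξ, x⟫ : ℝ) : ℂ) =
    ((2 * Real.pi * ⟪ξ, x⟫ : ℝ) : ℂ) * Complex.I by push_cast; ring]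
  exact Complex.norm_exp_ofReal_mul_I _

theorem character_zero_left (x : V) : character 0 x = 1 := by simp [character]

theorem character_zero_right (ξ : V) : character ξ 0 = 1 := by simp [character]

theorem character_add_left (ξ η x : V) : character (ξ + η) x = character ξ x * character η x := by
  rw [character, character, character, ← Complex.exp_add, inner_add_left]
  push_cast
  ring_nf

theorem character_add_right (ξ x y : V) : character ξ (x + y) = character ξ x * character ξ y := by
  rw [character, character, character, ← Complex.exp_add, inner_add_right]
  push_cast
  ring_nf

theorem character_smul_right (ξ x : V) (c : ℝ) : character ξ (c • x) = character (c • ξ) x := by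
  rw [character, character, real_inner_smul_left, real_inner_smul_right]

theorem continuous_character (ξ : V) : Continuous (character ξ) := by
  unfold character
  fun_prop

theorem memBernstein_character {Ω : Set V} {ξ : V} (hξ : ξ ∈ Ω) : MemBernstein Ω (character ξ) := by
  refine ⟨continuous_character ξ, ⟨1, fun x => (norm_character ξ x).le⟩, fun ψ h1 h2 h3 => ?_⟩
  refine (integral_fourier_mul_cexp h1 h2 ξ).trans (image_eq_zero_of_notMem_tsupport fun h => ?_)
  exact (Set.eq_empty_iff_forall_notMem.1 h3 ξ) ⟨h, hξ⟩

theorem MemBernstein.zero (Ω : Set V) : MemBernstein Ω (0 : V → ℂ) :=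
  ⟨continuous_const, ⟨0, by simp⟩, by simp⟩

theorem MemBernstein.add {Ω : Set V} {f g : V → ℂ} (hf : MemBernstein Ω f)
    (hg : MemBernstein Ω g) : MemBernstein Ω (f + g) := by
  obtain ⟨hfc, ⟨A, hA⟩, hfv⟩ := hf
  obtain ⟨hgc, ⟨B, hB⟩, hgv⟩ := hg
  refine ⟨hfc.add hgc, ⟨A + B, fun x => (norm_add_le _ _).trans (add_le_add (hA x) (hB x))⟩,
    fun ψ h1 h2 h3 => ?_⟩
  simp only [Pi.add_apply, add_mul]
  rw [integral_add (by simpa using integrable_mul_fourier hfc hA h1 h2 0)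
    (by simpa using integrable_mul_fourier hgc hB h1 h2 0), hfv ψ h1 h2 h3,
    hgv ψ h1 h2 h3, add_zero]

/-- Trigonometric polynomials with frequencies in `K`. -/
def trigPoly (K : Set V) : Submodule ℂ (V → ℂ) := Submodule.span ℂ (character '' K)

theorem character_mem_trigPoly {K : Set V} {ξ : V} (hξ : ξ ∈ K) : character ξ ∈ trigPoly K :=
  Submodule.subset_span ⟨ξ, hξ, rfl⟩

theorem trigPoly_mono {K L : Set V} (h : K ⊆ L) : trigPoly K ≤ trigPoly L :=
  Submodule.span_mono (Set.image_mono h)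

theorem memBernstein_of_mem_trigPoly {Ω : Set V} {f : V → ℂ} (hf : f ∈ trigPoly Ω) :
    MemBernstein Ω f := by
  induction hf using Submodule.span_induction with
  | mem x h =>
    obtain ⟨ξ, hξ, rfl⟩ := h
    exact memBernstein_character hξ
  | zero => exact MemBernstein.zero Ω
  | add x y _ _ hx hy => exact hx.add hy
  | smul a x _ hx => exact hx.const_mul a

theorem mul_mem_trigPoly {K L : Set V} {f g : V → ℂ} (hf : f ∈ trigPoly K)
    (hg : g ∈ trigPoly L) : f * g ∈ trigPoly (K + L) := by
  have h := Submodule.mul_mem_mul hf hg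
  rw [trigPoly, trigPoly, Submodule.span_mul_span] at h
  refine Submodule.span_mono ?_ h
  rintro _ ⟨_, ⟨ξ, hξ, rfl⟩, _, ⟨η, hη, rfl⟩, rfl⟩
  exact ⟨ξ + η, Set.add_mem_add hξ hη, funext fun x => character_add_left ξ η x⟩

theorem comp_affine_mem_trigPoly {K : Set V} {f : V → ℂ} (hf : f ∈ trigPoly K) (c : ℝ) (v : V) :
    (fun x => f (c • x + v)) ∈ trigPoly (c • K) := by
  induction hf using Submodule.span_induction with
  | mem x h =>
    obtain ⟨ξ, hξ, rfl⟩ := h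
    have : (fun x => character ξ (c • x + v)) = character ξ v • character (c • ξ) := by
      funext x
      rw [character_add_right, character_smul_right, mul_comm]
      rfl
    rw [this]
    exact Submodule.smul_mem _ _ (character_mem_trigPoly (Set.smul_mem_smul_set hξ))
  | zero => exact Submodule.zero_mem _
  | add x y _ _ hx hy => exact Submodule.add_mem _ hx hy
  | smul a x _ hx => exact Submodule.smul_mem _ a hx

/-- `f` is continuous and a bounded pointwise limit of trigonometric polynomials with frequencies
in `K`. -/
def IsTrigLimit (K : Set V) (f : V → ℂ) : Prop :=
  Continuous f ∧ ∃ (h : ℕ → V → ℂ) (B : ℝ), (∀ n, h n ∈ trigPoly K) ∧ (∀ n x, ‖h n x‖ ≤ B) ∧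
    ∀ x, Tendsto (fun n => h n x) atTop (nhds (f x))

namespace IsTrigLimit

theorem memBernstein {Ω : Set V} {f : V → ℂ} (hf : IsTrigLimit Ω f) : MemBernstein Ω f := by
  obtain ⟨hc, h, B, hm, hB, hl⟩ := hf
  exact MemBernstein.of_tendsto (fun n => memBernstein_of_mem_trigPoly (hm n)) hB hc hl

theorem mono {K L : Set V} {f : V → ℂ} (hf : IsTrigLimit K f) (hKL : K ⊆ L) : IsTrigLimit L f := by
  obtain ⟨hc, h, B, hm, hB, hl⟩ := hf
  exact ⟨hc, h, B, fun n => trigPoly_mono hKL (hm n), hB, hl⟩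

theorem of_character {K : Set V} {ξ : V} (hξ : ξ ∈ K) : IsTrigLimit K (character ξ) :=
  ⟨continuous_character ξ, fun _ => character ξ, 1, fun _ => character_mem_trigPoly hξ,
    fun _ x => (norm_character ξ x).le, fun _ => tendsto_const_nhds⟩

theorem zero (K : Set V) : IsTrigLimit K (fun _ => 0) :=
  ⟨continuous_const, fun _ => 0, 0, fun _ => Submodule.zero_mem _, by simp,
    fun _ => tendsto_const_nhds⟩

theorem add {K : Set V} {f g : V → ℂ} (hf : IsTrigLimit K f) (hg : IsTrigLimit K g) :
    IsTrigLimit K (fun x => f x + g x) := by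
  obtain ⟨hc, h, B, hm, hB, hl⟩ := hf
  obtain ⟨hc', h', B', hm', hB', hl'⟩ := hg
  exact ⟨hc.add hc', fun n => h n + h' n, B + B', fun n => Submodule.add_mem _ (hm n) (hm' n),
    fun n x => (norm_add_le _ _).trans (add_le_add (hB n x) (hB' n x)),
    fun x => (hl x).add (hl' x)⟩

theorem const_mul {K : Set V} {f : V → ℂ} (hf : IsTrigLimit K f) (c : ℂ) :
    IsTrigLimit K (fun x => c * f x) := by
  obtain ⟨hc, h, B, hm, hB, hl⟩ := hf
  refine ⟨continuous_const.mul hc, fun n => c • h n, ‖c‖ * B,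
    fun n => Submodule.smul_mem _ c (hm n), fun n x => ?_, fun x => (hl x).const_mul c⟩
  change ‖c * h n x‖ ≤ _
  rw [norm_mul]
  exact mul_le_mul_of_nonneg_left (hB n x) (norm_nonneg c)

theorem sum {ι : Type*} {K : Set V} {f : ι → V → ℂ} (s : Finset ι)
    (hf : ∀ i ∈ s, IsTrigLimit K (f i)) : IsTrigLimit K (fun x => ∑ i ∈ s, f i x) := by
  classical
  induction s using Finset.induction_on with
  | empty => simpa using zero K
  | insert a s ha ih =>
    simp only [Finset.sum_insert ha]
    exact (hf a (Finset.mem_insert_self a s)).add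
      (ih fun i hi => hf i (Finset.mem_insert_of_mem hi))

theorem mul {K L : Set V} {f g : V → ℂ} (hf : IsTrigLimit K f) (hg : IsTrigLimit L g) :
    IsTrigLimit (K + L) (fun x => f x * g x) := by
  obtain ⟨hc, h, B, hm, hB, hl⟩ := hf
  obtain ⟨hc', h', B', hm', hB', hl'⟩ := hg
  refine ⟨hc.mul hc', fun n => h n * h' n, B * B', fun n => mul_mem_trigPoly (hm n) (hm' n),
    fun n x => ?_, fun x => (hl x).mul (hl' x)⟩
  change ‖h n x * h' n x‖ ≤ _
  rw [norm_mul]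
  exact mul_le_mul (hB n x) (hB' n x) (norm_nonneg _) ((norm_nonneg _).trans (hB n x))

theorem comp_affine {K : Set V} {f : V → ℂ} (hf : IsTrigLimit K f) (c : ℝ) (v : V) :
    IsTrigLimit (c • K) (fun x => f (c • x + v)) := by
  obtain ⟨hc, h, B, hm, hB, hl⟩ := hf
  exact ⟨hc.comp (by fun_prop), fun n x => h n (c • x + v), B,
    fun n => comp_affine_mem_trigPoly (hm n) c v, fun n x => hB n _, fun x => hl _⟩

end IsTrigLimit

theorem sinc_two_mul (x : ℝ) : Real.sinc (2 * x) = Real.sinc x * Real.cos x := by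
  rcases eq_or_ne x 0 with rfl | hx
  · simp
  · rw [Real.sinc_of_ne_zero hx, Real.sinc_of_ne_zero (by simpa using hx), Real.sin_two_mul]
    field_simp

theorem sinc_eq_sinc_mul_prod_cos (x : ℝ) (n : ℕ) :
    Real.sinc x = Real.sinc (x / 2 ^ n) * ∏ k ∈ Finset.range n, Real.cos (x / 2 ^ (k + 1)) := by
  induction n with
  | zero => simp
  | succ n ih =>
    rw [Finset.prod_range_succ, ih,
      show x / 2 ^ n = 2 * (x / 2 ^ (n + 1)) by rw [pow_succ]; field_simp, sinc_two_mul]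
    ring

/-- Viète's infinite product. -/
theorem tendsto_prod_cos (x : ℝ) :
    Tendsto (fun n : ℕ => ∏ k ∈ Finset.range n, Real.cos (x / 2 ^ (k + 1))) atTop
      (nhds (Real.sinc x)) := by
  have h1 : Tendsto (fun n : ℕ => Real.sinc (x / 2 ^ n)) atTop (nhds 1) := by
    rw [← Real.sinc_zero]
    refine (Real.continuous_sinc.tendsto 0).comp ?_
    exact tendsto_const_nhds.div_atTop (tendsto_pow_atTop_atTop_of_one_lt one_lt_two)
  have h2 : Tendsto (fun n : ℕ => Real.sinc x / Real.sinc (x / 2 ^ n)) atTop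
      (nhds (Real.sinc x)) := by
    have := (tendsto_const_nhds (x := Real.sinc x)).div h1 one_ne_zero
    rwa [div_one] at this
  refine h2.congr' ?_
  filter_upwards [h1.eventually_ne one_ne_zero] with n hn
  rw [div_eq_iff hn, mul_comm]
  exact sinc_eq_sinc_mul_prod_cos x n

theorem cos_mem_trigPoly (u : V) (a c : ℝ) :
    (fun x : V => ((Real.cos (Real.pi * (⟪u, x⟫ + a) * (2 * c)) : ℝ) : ℂ)) ∈
      trigPoly ((fun t : ℝ => t • u) '' closedBall 0 |c|) := by
  have : (fun x : V => ((Real.cos (Real.pi * (⟪u, x⟫ + a) * (2 * c)) : ℝ) : ℂ)) =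
      (Complex.exp (2 * Real.pi * a * c * Complex.I) / 2) • character (c • u) +
      (Complex.exp (-(2 * Real.pi * a * c * Complex.I)) / 2) • character ((-c) • u) := by
    funext x
    simp only [Pi.add_apply, Pi.smul_apply, smul_eq_mul, character, real_inner_smul_left]
    rw [Complex.ofReal_cos, Complex.cos, div_mul_eq_mul_div, div_mul_eq_mul_div,
      ← Complex.exp_add, ← Complex.exp_add, ← add_div]
    congr 3 <;> · push_cast; ring
  rw [this]
  refine Submodule.add_mem _ ?_ ?_ <;> refine Submodule.smul_mem _ _ (character_mem_trigPoly ?_)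
  · exact ⟨c, by simp, rfl⟩
  · exact ⟨-c, by simp, rfl⟩

theorem isTrigLimit_sinc (u : V) (a : ℝ) :
    IsTrigLimit ((fun t : ℝ => t • u) '' closedBall 0 (1 / 2))
      (fun x => ((Real.sinc (Real.pi * (⟪u, x⟫ + a)) : ℝ) : ℂ)) := by
  refine ⟨Complex.continuous_ofReal.comp (Real.continuous_sinc.comp (by fun_prop)),
    fun n x => ((∏ k ∈ Finset.range n, Real.cos (Real.pi * (⟪u, x⟫ + a) / 2 ^ (k + 1)) : ℝ) : ℂ),
    1, fun n => ?_, fun n x => ?_, fun x => ?_⟩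
  · suffices h : (fun x : V => ((∏ k ∈ Finset.range n,
        Real.cos (Real.pi * (⟪u, x⟫ + a) / 2 ^ (k + 1)) : ℝ) : ℂ)) ∈
        trigPoly ((fun t : ℝ => t • u) '' closedBall 0 ((1 - (2 ^ n)⁻¹) / 2)) by
      refine trigPoly_mono (Set.image_mono (closedBall_subset_closedBall ?_)) h
      have : (0 : ℝ) ≤ (2 ^ n)⁻¹ := by positivity
      linarith
    induction n with
    | zero =>
      convert character_mem_trigPoly (ξ := (0 : V)) _ using 1
      · funext x
        simp [character_zero_left]
      · exact ⟨0, by simp, by simp⟩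
    | succ n ih =>
      have h1 := mul_mem_trigPoly ih (cos_mem_trigPoly u a ((2 ^ (n + 2))⁻¹))
      convert trigPoly_mono ?_ h1 using 1
      · funext x
        rw [Finset.prod_range_succ, Pi.mul_apply, ← Complex.ofReal_mul]
        congr 4
        field_simp
        ring
      · rintro _ ⟨_, ⟨t, ht, rfl⟩, _, ⟨s, hs, rfl⟩, rfl⟩
        refine ⟨t + s, ?_, add_smul _ _ _⟩
        rw [mem_closedBall_zero_iff] at ht hs ⊢
        refine (norm_add_le _ _).trans ((add_le_add ht hs).trans (le_of_eq ?_))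
        rw [abs_of_pos (by positivity)]
        field_simp
        ring
  · rw [Complex.norm_real, Real.norm_eq_abs, Finset.abs_prod]
    exact Finset.prod_le_one (fun _ _ => abs_nonneg _) fun _ _ => Real.abs_cos_le_one _
  · exact (Complex.continuous_ofReal.tendsto _).comp (tendsto_prod_cos _)

theorem abs_sinc_le_inv {x : ℝ} (hx : x ≠ 0) : |Real.sinc x| ≤ |x|⁻¹ := by
  rw [Real.sinc_of_ne_zero hx, abs_div, ← one_div]
  exact div_le_div_of_nonneg_right (Real.abs_sin_le_one x) (abs_nonneg x)

theorem abs_sinc_pi_mul_mul_le (x : ℝ) : |Real.sinc (Real.pi * x)| * |x| ≤ 1 := by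
  rcases eq_or_ne x 0 with rfl | hx
  · simp
  · have h := abs_sinc_le_inv (mul_ne_zero Real.pi_ne_zero hx)
    rw [abs_mul, abs_of_pos Real.pi_pos] at h
    have h0 : 0 < |x| := abs_pos.2 hx
    calc _ ≤ (Real.pi * |x|)⁻¹ * |x| := by gcongr
      _ = Real.pi⁻¹ := by field_simp
      _ ≤ 1 := inv_le_one_of_one_le₀ (by linarith [Real.pi_gt_three])

theorem sinc_pi_mul_intCast {k : ℤ} (hk : k ≠ 0) : Real.sinc (Real.pi * k) = 0 := by
  rw [Real.sinc_of_ne_zero (mul_ne_zero Real.pi_ne_zero (by exact_mod_cast hk)), mul_comm,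
    Real.sin_int_mul_pi, zero_div]

/-- A uniformly discrete set has arbitrarily long windows, far away from the origin relative to
their length, with no more points than the lower uniform density predicts. -/
theorem exists_sparse_window {Λ : Set ℝ} (hΛ : UniformlyDiscrete Λ) {ρ : ℝ} (hρ : 0 < ρ) (W₀ : ℝ) :
    ∃ W x₀ : ℝ, W₀ ≤ W ∧ 0 < W ∧ 2 * W ≤ |x₀| ∧
      ((Λ ∩ closedBall x₀ W).ncard : ℝ) ≤ (lowerUniformDensity Λ + ρ) * (2 * W) := by
  set d := lowerUniformDensity Λ with hd
  have hd0 : 0 ≤ d := lowerUniformDensity_nonneg hΛ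
  have h1 : ∀ᶠ r : ℝ in atTop, ∀ x, (d - ρ / 8) * (2 * (3 * r / 4 - 1)) ≤
      ((Λ ∩ closedBall x (3 * r / 4 - 1)).ncard : ℝ) := by
    have ht : Tendsto (fun r : ℝ => 3 * r / 4 - 1) atTop atTop := by
      have := (tendsto_id (α := ℝ) (x := atTop)).const_mul_atTop (show (0 : ℝ) < 3 / 4 by norm_num)
      exact (tendsto_atTop_add_const_right _ (-1) this).congr fun r => by simp; ring
    exact ht.eventually (eventually_mul_le_ncard (show d - ρ / 8 < d by linarith))
  have h2 := frequently_exists_ncard_lt hΛ (show d < d + ρ / 8 by linarith)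
  obtain ⟨r, ⟨x, hx⟩, hr, hrW, hrd, hr0⟩ := (h2.and_eventually (h1.and
    ((eventually_ge_atTop (4 * W₀)).and ((eventually_ge_atTop (32 * d / ρ)).and
      (eventually_gt_atTop 0))))).exists
  rw [div_le_iff₀ hρ] at hrd
  obtain ⟨δ, hδ, hsep⟩ := hΛ
  have key : ∀ x₀ c : ℝ, closedBall x₀ (r / 4) ⊆ closedBall x r →
      closedBall c (3 * r / 4 - 1) ⊆ closedBall x r →
      Disjoint (closedBall x₀ (r / 4)) (closedBall c (3 * r / 4 - 1)) →
      ((Λ ∩ closedBall x₀ (r / 4)).ncard : ℝ) ≤ (d + ρ) * (2 * (r / 4)) := by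
    intro x₀ c hs1 hs2 hdis
    have hf := fun x r => (ncard_inter_closedBall_le hδ hsep x r).1
    have hle := Set.ncard_le_ncard (Set.union_subset (Set.inter_subset_inter_right Λ hs1)
      (Set.inter_subset_inter_right Λ hs2)) (hf x r)
    rw [Set.ncard_union_eq (hdis.mono Set.inter_subset_right Set.inter_subset_right)
      (hf _ _) (hf _ _)] at hle
    have hle' : ((Λ ∩ closedBall x₀ (r / 4)).ncard : ℝ) +
        (Λ ∩ closedBall c (3 * r / 4 - 1)).ncard ≤ (Λ ∩ closedBall x r).ncard := by
      exact_mod_cast hle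
    have := hr c
    nlinarith
  have hball : ∀ x₀ c : ℝ, |x₀ - x| ≤ 3 * r / 4 → |c - x| ≤ r / 4 → r ≤ |x₀ - c| →
      ((Λ ∩ closedBall x₀ (r / 4)).ncard : ℝ) ≤ (d + ρ) * (2 * (r / 4)) := by
    intro x₀ c h3 h4 h5
    refine key x₀ c (closedBall_subset_closedBall' ?_) (closedBall_subset_closedBall' ?_)
      (closedBall_disjoint_closedBall ?_) <;> rw [Real.dist_eq] <;> linarith
  rcases le_total 0 x with h | h
  · refine ⟨r / 4, x + 3 * r / 4, by linarith, by positivity, ?_,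
      hball (x + 3 * r / 4) (x - r / 4) ?_ ?_ ?_⟩
    · exact le_abs.2 (Or.inl (by linarith))
    · rw [abs_le]; constructor <;> linarith
    · rw [abs_le]; constructor <;> linarith
    · exact le_abs.2 (Or.inl (by linarith))
  · refine ⟨r / 4, x - 3 * r / 4, by linarith, by positivity, ?_,
      hball (x - 3 * r / 4) (x + r / 4) ?_ ?_ ?_⟩
    · exact le_abs.2 (Or.inr (by linarith))
    · rw [abs_le]; constructor <;> linarith
    · rw [abs_le]; constructor <;> linarith
    · exact le_abs.2 (Or.inr (by linarith))

/-- A linear combination of finitely many functions can be made to vanish at fewer points. -/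
theorem exists_ne_zero_sum_mul_eq_zero {ι : Type*} (s : Finset ι) (F : Set ℝ) (hF : F.Finite)
    (hcard : F.ncard < s.card) (φ : ι → ℝ → ℝ) :
    ∃ c : ι → ℝ, (∃ k ∈ s, c k ≠ 0) ∧ ∀ t ∈ F, ∑ k ∈ s, c k * φ k t = 0 := by
  classical
  have := hF.fintype
  set T : (s → ℝ) →ₗ[ℝ] (F → ℝ) :=
    { toFun := fun c t => ∑ k : s, c k * φ k t
      map_add' := fun c c' => by
        funext t
        simp [add_mul, Finset.sum_add_distrib]
      map_smul' := fun a c => by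
        funext t
        simp [Finset.mul_sum, mul_assoc] } with hT
  have hlt : Module.finrank ℝ (F → ℝ) < Module.finrank ℝ (s → ℝ) := by
    rw [Module.finrank_fintype_fun_eq_card, Module.finrank_fintype_fun_eq_card,
      ← Nat.card_eq_fintype_card, Nat.card_coe_set_eq]
    simpa using hcard
  obtain ⟨c, hc, hc0⟩ := Submodule.exists_mem_ne_zero_of_ne_bot
    (LinearMap.ker_ne_bot_of_finrank_lt (f := T) hlt)
  obtain ⟨k, hk⟩ := Function.ne_iff.1 hc0
  refine ⟨fun i => if h : i ∈ s then c ⟨i, h⟩ else 0, ⟨k, k.2, by simpa using hk⟩, fun t ht => ?_⟩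
  have h := congrFun (LinearMap.mem_ker.1 hc) ⟨t, ht⟩
  rw [← Finset.sum_coe_sort]
  simpa [hT] using h

/-- A band-limited interpolation kernel with quadratic decay. -/
def sincKernel (σ τ t : ℝ) : ℝ :=
  Real.sinc (Real.pi * (σ * t)) * Real.sinc (Real.pi * (τ * t)) ^ 2

theorem sincKernel_zero (σ τ : ℝ) : sincKernel σ τ 0 = 1 := by simp [sincKernel]

theorem sincKernel_intCast_div {σ : ℝ} (hσ : σ ≠ 0) (τ : ℝ) {k : ℤ} (hk : k ≠ 0) :
    sincKernel σ τ (k / σ) = 0 := by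
  rw [sincKernel, mul_div_cancel₀ _ hσ, sinc_pi_mul_intCast hk, zero_mul]

theorem abs_sincKernel_le {σ τ t a : ℝ} (hτ : 0 < τ) (ha : 0 < a) (h : a ≤ |t|) :
    |sincKernel σ τ t| ≤ ((τ * a) ^ 2)⁻¹ := by
  have h1 := abs_sinc_pi_mul_mul_le (τ * t)
  have h2 : 0 < τ * a := by positivity
  have h3 : τ * a ≤ |τ * t| := by
    rw [abs_mul, abs_of_pos hτ]
    gcongr
  have h4 : |Real.sinc (Real.pi * (τ * t))| ≤ (τ * a)⁻¹ := by
    rw [← one_div, le_div_iff₀ h2]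
    exact (mul_le_mul_of_nonneg_left h3 (abs_nonneg _)).trans h1
  rw [sincKernel, abs_mul, abs_pow, ← inv_pow]
  calc _ ≤ 1 * ((τ * a)⁻¹) ^ 2 := by
        gcongr
        exact Real.abs_sinc_le_one _
    _ = _ := one_mul _

/-- Coefficients of a band-limited function, of bandwidth slightly larger than the lower uniform
density, which is small on the given uniformly discrete set. -/
theorem exists_gap_coeffs {Λ : Set ℝ} (hΛ : UniformlyDiscrete Λ) {ρ ε : ℝ} (hρ : 0 < ρ)
    (hε : 0 < ε) {σ : ℝ} (hσ : σ = lowerUniformDensity Λ + ρ / 2) :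
    ∃ (s : Finset ℤ) (x₀ W : ℝ) (c : ℤ → ℝ), 2 * W ≤ |x₀| ∧ 0 < W ∧ 1 ≤ ε * (ρ * W) ∧
      (∃ k ∈ s, c k ≠ 0) ∧
      (∀ t ∈ Λ, |t - x₀| ≤ W → ∑ k ∈ s, c k * sincKernel σ (ρ / 4) (t - x₀ - k / σ) = 0) ∧
      ∀ M, (∀ k ∈ s, |c k| ≤ M) → ∀ t, W < |t - x₀| →
        |∑ k ∈ s, c k * sincKernel σ (ρ / 4) (t - x₀ - k / σ)| ≤ ε * M := by
  have hd0 : 0 ≤ lowerUniformDensity Λ := lowerUniformDensity_nonneg hΛ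
  have hσ0 : 0 < σ := by linarith
  obtain ⟨W, x₀, hW₀, hW, hx₀, hcard⟩ := exists_sparse_window hΛ (show 0 < ρ / 8 by positivity)
    (max (2 / ρ + 1) (max (3072 * σ ^ 3 / (ρ ^ 4 * ε)) (1 / (ε * ρ))))
  simp only [max_le_iff] at hW₀
  obtain ⟨hW1, hW2, hW3⟩ := hW₀
  have hW1' : 2 < ρ * W := by
    have : 2 / ρ < W := by linarith
    rwa [div_lt_iff₀' hρ] at this
  rw [div_le_iff₀ (by positivity)] at hW2 hW3
  obtain ⟨δ, hδ, hsep⟩ := hΛ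
  set K : ℕ := ⌊(σ - ρ / 8) * W⌋₊
  have hpos : 0 ≤ (σ - ρ / 8) * W := mul_nonneg (by linarith) hW.le
  have hK1 : (K : ℝ) ≤ (σ - ρ / 8) * W := Nat.floor_le hpos
  have hK2 : (σ - ρ / 8) * W < K + 1 := Nat.lt_floor_add_one _
  have hsc : (Finset.Icc (-(K : ℤ)) K).card = 2 * K + 1 := by
    rw [Int.card_Icc]
    omega
  obtain ⟨c, hc0, hc⟩ := exists_ne_zero_sum_mul_eq_zero (Finset.Icc (-(K : ℤ)) K)
    (Λ ∩ closedBall x₀ W) (ncard_inter_closedBall_le hδ hsep x₀ W).1 (by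
      rw [hsc]
      have : ((Λ ∩ closedBall x₀ W).ncard : ℝ) < 2 * K + 1 := by
        refine hcard.trans_lt ?_
        nlinarith
      exact_mod_cast this) (fun k t => sincKernel σ (ρ / 4) (t - x₀ - k / σ))
  refine ⟨Finset.Icc (-(K : ℤ)) K, x₀, W, c, hx₀, hW, by linarith, hc0,
    fun t ht htW => hc t ⟨ht, by rwa [mem_closedBall, Real.dist_eq]⟩, fun M hM t ht => ?_⟩
  have hM0 : 0 ≤ M := by
    obtain ⟨k, hk, -⟩ := hc0
    exact (abs_nonneg _).trans (hM k hk)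
  have ha : 0 < ρ * W / (8 * σ) := by positivity
  have hterm : ∀ k ∈ Finset.Icc (-(K : ℤ)) K,
      |c k * sincKernel σ (ρ / 4) (t - x₀ - k / σ)| ≤
        M * ((ρ / 4 * (ρ * W / (8 * σ))) ^ 2)⁻¹ := by
    intro k hk
    rw [abs_mul]
    refine mul_le_mul (hM k hk) (abs_sincKernel_le (by positivity) ha ?_) (abs_nonneg _) hM0
    have hk' : |(k : ℝ)| ≤ K := by
      rw [Finset.mem_Icc] at hk
      rw [abs_le]
      exact ⟨by exact_mod_cast hk.1, by exact_mod_cast hk.2⟩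
    have h1 : |(k : ℝ) / σ| ≤ W - ρ * W / (8 * σ) := by
      rw [abs_div, abs_of_pos hσ0, div_le_iff₀ hσ0]
      refine hk'.trans (hK1.trans (le_of_eq ?_))
      field_simp
    have h2 := abs_sub_abs_le_abs_sub (t - x₀) (k / σ)
    linarith
  refine (Finset.abs_sum_le_sum_abs _ _).trans ((Finset.sum_le_sum hterm).trans ?_)
  rw [Finset.sum_const, hsc, nsmul_eq_mul]
  have h3 : ((2 * K + 1 : ℕ) : ℝ) ≤ 3 * (σ * W) := by
    push_cast
    nlinarith
  have h4 : 3 * (σ * W) * ((ρ / 4 * (ρ * W / (8 * σ))) ^ 2)⁻¹ ≤ ε := by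
    have : 3 * (σ * W) * ((ρ / 4 * (ρ * W / (8 * σ))) ^ 2)⁻¹ = 3072 * σ ^ 3 / (ρ ^ 4 * W) := by
      field_simp
      norm_num
    rw [this, div_le_iff₀ (by positivity)]
    linarith
  calc _ = ((2 * K + 1 : ℕ) : ℝ) * ((ρ / 4 * (ρ * W / (8 * σ))) ^ 2)⁻¹ * M := by ring
    _ ≤ 3 * (σ * W) * ((ρ / 4 * (ρ * W / (8 * σ))) ^ 2)⁻¹ * M := by gcongr
    _ ≤ ε * M := by gcongr

section Plane

local notation "E" => EuclideanSpace ℝ (Fin 2)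

theorem isTrigLimit_sinc_coord (i : Fin 2) (σ a : ℝ) :
    IsTrigLimit ((fun t : ℝ => t • EuclideanSpace.single i (1 : ℝ)) '' closedBall 0 (|σ| / 2))
      (fun x : E => ((Real.sinc (Real.pi * (σ * (x i - a))) : ℝ) : ℂ)) := by
  convert (isTrigLimit_sinc (σ • EuclideanSpace.single i (1 : ℝ) : E) (-(σ * a))).mono ?_ using 1
  · funext x
    rw [real_inner_smul_left, EuclideanSpace.inner_single_left]
    simp only [map_one, one_mul, ← mul_neg, ← mul_add, sub_eq_add_neg]
  · rintro _ ⟨t, ht, rfl⟩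
    refine ⟨t * σ, ?_, by simp [smul_smul]⟩
    rw [mem_closedBall_zero_iff, Real.norm_eq_abs] at ht ⊢
    rw [abs_mul]
    nlinarith [abs_nonneg σ]

theorem isTrigLimit_sincKernel_coord (i : Fin 2) (σ τ a : ℝ) :
    IsTrigLimit ((fun t : ℝ => t • EuclideanSpace.single i (1 : ℝ)) ''
        closedBall 0 (|σ| / 2 + |τ|))
      (fun x : E => (sincKernel σ τ (x i - a) : ℂ)) := by
  have h := isTrigLimit_sinc_coord i τ a
  convert ((isTrigLimit_sinc_coord i σ a).mul (h.mul h)).mono ?_ using 1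
  · funext x
    rw [sincKernel]
    push_cast
    ring
  · rintro _ ⟨_, ⟨t, ht, rfl⟩, _, ⟨_, ⟨t₁, ht₁, rfl⟩, _, ⟨t₂, ht₂, rfl⟩, rfl⟩, rfl⟩
    refine ⟨t + (t₁ + t₂), ?_, by simp [add_smul]⟩
    rw [mem_closedBall_zero_iff] at *
    refine (norm_add_le _ _).trans ?_
    have := norm_add_le t₁ t₂
    linarith

theorem exists_small_on_squares {Q : Set ℝ} (hQpos : Q ⊆ Set.Ioi 0) (hQ : UniformlyDiscrete Q)
    {i j : Fin 2} (hij : i ≠ j) {ρ ε : ℝ} (hρ : 0 < ρ) (hε : 0 < ε) :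
    ∃ (f : E → ℂ) (M : ℝ), 0 < M ∧ (∀ x, ‖f x‖ ≤ M) ∧ (∃ y, M / 2 ≤ ‖f y‖) ∧
      IsTrigLimit {ξ | |ξ i| ≤ (lowerUniformDensity (Q ∪ -Q) + ρ) / 2 ∧ |ξ j| ≤ ρ / 2} f ∧
      ∀ p : E, ‖(WithLp.ofLp p : Fin 2 → ℝ)‖ ∈ Q → ‖f p‖ ≤ ε * M := by
  have hΛ : UniformlyDiscrete (Q ∪ -Q) := by
    obtain ⟨δ, hδ, h, -⟩ := exists_separation_symm hQpos hQ
    exact ⟨δ, hδ, h⟩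
  set σ := lowerUniformDensity (Q ∪ -Q) + ρ / 2 with hσ
  have hσ0 : 0 < σ := by linarith [lowerUniformDensity_nonneg hΛ]
  obtain ⟨s, x₀, W, c, hx₀, hW, hεW, ⟨k₀, hk₀, hck₀⟩, hzero, hout⟩ := exists_gap_coeffs hΛ hρ hε hσ
  set g : ℝ → ℝ := fun t => ∑ k ∈ s, c k * sincKernel σ (ρ / 4) (t - x₀ - k / σ) with hg
  set f : E → ℂ := fun x => (g (x i) : ℂ) * ((Real.sinc (Real.pi * (ρ * (x j - 0))) : ℝ) : ℂ)
    with hf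
  have hfn : ∀ x, ‖f x‖ = |g (x i)| * |Real.sinc (Real.pi * (ρ * x j))| := fun x => by
    simp [hf]
  have hftrig : IsTrigLimit {ξ | |ξ i| ≤ (lowerUniformDensity (Q ∪ -Q) + ρ) / 2 ∧
      |ξ j| ≤ ρ / 2} f := by
    have h1 : IsTrigLimit ((fun t : ℝ => t • EuclideanSpace.single i (1 : ℝ)) ''
        closedBall 0 (|σ| / 2 + |ρ / 4|)) (fun x : E => (g (x i) : ℂ)) := by
      simp only [hg, Complex.ofReal_sum, Complex.ofReal_mul, sub_sub]
      exact IsTrigLimit.sum s fun k _ =>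
        (isTrigLimit_sincKernel_coord i σ (ρ / 4) (x₀ + k / σ)).const_mul (c k)
    refine (h1.mul (isTrigLimit_sinc_coord j ρ 0)).mono ?_
    rintro _ ⟨_, ⟨t, ht, rfl⟩, _, ⟨t', ht', rfl⟩, rfl⟩
    rw [mem_closedBall_zero_iff, Real.norm_eq_abs] at ht ht'
    rw [abs_of_pos hσ0, abs_of_pos (show 0 < ρ / 4 by positivity)] at ht
    rw [abs_of_pos hρ] at ht'
    simp [hij, hij.symm]
    constructor <;> linarith
  have hbdd : BddAbove (Set.range fun x => ‖f x‖) := by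
    obtain ⟨B, hB⟩ := hftrig.memBernstein.2.1
    exact ⟨B, by rintro _ ⟨x, rfl⟩; exact hB x⟩
  set M := ⨆ x, ‖f x‖
  have hM : ∀ x, ‖f x‖ ≤ M := le_ciSup hbdd
  have hgM : ∀ t, |g t| ≤ M := fun t => by
    have := hM (t • EuclideanSpace.single i (1 : ℝ))
    rw [hfn] at this
    simpa [hij, hij.symm] using this
  have hcM : ∀ k ∈ s, |c k| ≤ M := fun k hk => by
    have : g (x₀ + k / σ) = c k := by
      rw [hg]
      simp only
      rw [Finset.sum_eq_single_of_mem k hk fun l _ hl => ?_]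
      · simp [sincKernel_zero]
      · rw [show x₀ + k / σ - x₀ - l / σ = ((k - l : ℤ) : ℝ) / σ by push_cast; ring,
          sincKernel_intCast_div hσ0.ne' _ (sub_ne_zero.2 hl.symm), mul_zero]
    rw [← this]
    exact hgM _
  have hM0 : 0 < M := (abs_pos.2 hck₀).trans_le (hcM k₀ hk₀)
  refine ⟨f, M, hM0, hM, ?_, hftrig, fun p hp => ?_⟩
  · obtain ⟨y, hy⟩ := exists_lt_of_lt_ciSup (half_lt_self hM0)
    exact ⟨y, hy.le⟩
  · rw [hfn]
    have hS := Real.abs_sinc_le_one (Real.pi * (ρ * p j))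
    rcases lt_or_ge W |p i - x₀| with h | h
    · calc _ ≤ ε * M * 1 := mul_le_mul (hout M hcM _ h) hS (abs_nonneg _) (by positivity)
        _ = _ := mul_one _
    rcases le_total |p j| |p i| with h' | h'
    · rw [norm_ofLp_eq_abs hij p h'] at hp
      have hmem : p i ∈ Q ∪ -Q := by
        rcases abs_choice (p i) with h'' | h'' <;> rw [h''] at hp
        · exact Or.inl hp
        · exact Or.inr hp
      rw [show g (p i) = 0 from hzero _ hmem h, abs_zero, zero_mul]
      positivity
    · have hpj : W ≤ |p j| := by
        have := abs_sub_abs_le_abs_sub x₀ (p i)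
        rw [abs_sub_comm] at this
        linarith
      have h1 := abs_sinc_pi_mul_mul_le (ρ * p j)
      rw [abs_mul, abs_of_pos hρ] at h1
      have h2 : |Real.sinc (Real.pi * (ρ * p j))| ≤ ε := by
        have h3 : 0 < ρ * W := by positivity
        refine le_of_mul_le_mul_right ?_ h3
        refine le_trans ?_ (h1.trans hεW)
        gcongr
      rw [mul_comm ε]
      exact mul_le_mul (hgM _) h2 (abs_nonneg _) hM0.le

end Plane

theorem sum_dyadic_le (R : ℝ) (hR : 0 ≤ R) (N : ℕ) :
    ∑ l ∈ Finset.range N, (R / 2 ^ (l + 1)) / ((1 + 2 * (R / 2 ^ (l + 1))) *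
      (1 + R / 2 ^ (l + 1))) ≤ 1 := by
  have h : ∀ l ∈ Finset.range N, (R / 2 ^ (l + 1)) / ((1 + 2 * (R / 2 ^ (l + 1))) *
      (1 + R / 2 ^ (l + 1))) =
      (R / 2 ^ l) / (1 + R / 2 ^ l) - (R / 2 ^ (l + 1)) / (1 + R / 2 ^ (l + 1)) := by
    intro l _
    have h2 : R / 2 ^ l = 2 * (R / 2 ^ (l + 1)) := by
      rw [pow_succ]
      field_simp
    have h0 : 0 ≤ R / 2 ^ (l + 1) := by positivity
    rw [h2]
    generalize R / 2 ^ (l + 1) = t at *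
    field_simp
    ring
  rw [Finset.sum_congr rfl h, Finset.sum_range_sub']
  have h1 : R / 2 ^ 0 / (1 + R / 2 ^ 0) ≤ 1 := by
    rw [div_le_one (by positivity)]
    linarith [show 0 ≤ R / 2 ^ 0 by positivity]
  have h2 : 0 ≤ R / 2 ^ N / (1 + R / 2 ^ N) := by positivity
  linarith

theorem le_six_mul_div {A b t : ℝ} (ht : 0 ≤ t) (h1 : b ≤ A * t) (h2 : b * t ≤ A) :
    b ≤ 6 * A * (t / ((1 + 2 * t) * (1 + t))) := by
  rw [← mul_div_assoc, le_div_iff₀ (by positivity)]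
  nlinarith [mul_le_mul_of_nonneg_right h2 ht]

section Plane

local notation "E" => EuclideanSpace ℝ (Fin 2)

theorem norm_le_abs_add_abs {i j : Fin 2} (hij : i ≠ j) (v : E) : ‖v‖ ≤ |v i| + |v j| := by
  conv_lhs => rw [eq_smul_single_add hij v]
  refine (norm_add_le _ _).trans ?_
  simp [norm_smul]

theorem exists_bump {i j : Fin 2} (hij : i ≠ j) {r : ℝ} (hr : 0 < r) :
    ∃ H : E → ℂ, IsTrigLimit (closedBall 0 (r / 2)) H ∧ H 0 = 1 ∧ (∀ v, ‖H v‖ ≤ 1) ∧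
      ∀ v, ‖H v‖ * ‖v‖ ≤ 4 / r := by
  refine ⟨fun v => ((Real.sinc (Real.pi * (r / 2 * (v i - 0))) : ℝ) : ℂ) *
    ((Real.sinc (Real.pi * (r / 2 * (v j - 0))) : ℝ) : ℂ),
    ((isTrigLimit_sinc_coord i (r / 2) 0).mul (isTrigLimit_sinc_coord j (r / 2) 0)).mono ?_,
    by simp, fun v => ?_, fun v => ?_⟩
  · rintro _ ⟨_, ⟨t, ht, rfl⟩, _, ⟨t', ht', rfl⟩, rfl⟩
    rw [mem_closedBall_zero_iff, abs_of_pos (half_pos hr)] at *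
    refine (norm_add_le _ _).trans ?_
    simp only [norm_smul, PiLp.norm_single, norm_one, mul_one]
    linarith
  · rw [norm_mul, Complex.norm_real, Complex.norm_real]
    exact mul_le_one₀ (Real.abs_sinc_le_one _) (abs_nonneg _) (Real.abs_sinc_le_one _)
  · rw [norm_mul, Complex.norm_real, Complex.norm_real, sub_zero, sub_zero, Real.norm_eq_abs,
      Real.norm_eq_abs]
    have h1 := abs_sinc_pi_mul_mul_le (r / 2 * v i)
    have h2 := abs_sinc_pi_mul_mul_le (r / 2 * v j)
    rw [abs_mul (r / 2), abs_of_pos (half_pos hr)] at h1 h2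
    have h3 := Real.abs_sinc_le_one (Real.pi * (r / 2 * v i))
    have h4 := Real.abs_sinc_le_one (Real.pi * (r / 2 * v j))
    have h5 := norm_le_abs_add_abs hij v
    set a := |Real.sinc (Real.pi * (r / 2 * v i))|
    set b := |Real.sinc (Real.pi * (r / 2 * v j))|
    have ha : 0 ≤ a := abs_nonneg _
    have hb : 0 ≤ b := abs_nonneg _
    rw [le_div_iff₀ hr]
    calc a * b * ‖v‖ * r ≤ a * b * (|v i| + |v j|) * r := by gcongr
      _ = 2 * (b * (a * (r / 2 * |v i|)) + a * (b * (r / 2 * |v j|))) := by ring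
      _ ≤ 2 * (1 * 1 + 1 * 1) := by gcongr
      _ = 4 := by norm_num

theorem mem_of_convex_combination {Ω : Set E} (hconv : Convex ℝ Ω) {i j : Fin 2} (hij : i ≠ j)
    {α b : E} {d r ρ s : ℝ} (hd : 0 ≤ d) (hα : α ∈ Ω) (hα' : α + d • EuclideanSpace.single i 1 ∈ Ω)
    (hb : closedBall b r ⊆ Ω) (hρ : 0 ≤ ρ) (hs0 : 0 < s) (hs1 : s ≤ 1) (hρs : ρ ≤ s * r / 2)
    {v ζ : E} (hvi : |v i| ≤ (d + ρ) / 2) (hvj : |v j| ≤ ρ / 2) (hζ : ‖ζ‖ ≤ r / 2) :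
    (1 - s) • (α + (d / 2) • EuclideanSpace.single i 1) + s • b + (1 - s) • v + s • ζ ∈ Ω := by
  obtain ⟨w, hw1, hw2⟩ : ∃ w : ℝ, |w| ≤ d / 2 ∧ |v i - w| ≤ ρ / 2 := by
    rw [abs_le] at hvi
    refine ⟨max (-(d / 2)) (min (d / 2) (v i)), ?_, ?_⟩ <;> rw [abs_le] <;>
      rcases max_cases (-(d / 2)) (min (d / 2) (v i)) with h | h <;>
      rcases min_cases (d / 2) (v i) with h' | h' <;> constructor <;> linarith
  rw [abs_le] at hw1
  have hseg : α + (d / 2 + w) • EuclideanSpace.single i (1 : ℝ) ∈ Ω := by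
    rcases hd.eq_or_lt with rfl | hd
    · have : w = 0 := by linarith
      simpa [this] using hα
    · convert hconv hα hα' (a := (d / 2 - w) / d) (b := (d / 2 + w) / d)
        (div_nonneg (by linarith) hd.le) (div_nonneg (by linarith) hd.le) (by field_simp; ring)
        using 1
      have h1 : (d / 2 - w) / d = 1 - (d / 2 + w) / d := by field_simp; ring
      rw [h1, smul_add, smul_smul, div_mul_cancel₀ _ hd.ne']
      module
  set v' := v - w • EuclideanSpace.single i (1 : ℝ) with hv'
  have hv'n : ‖v'‖ ≤ ρ := by
    refine (norm_le_abs_add_abs hij v').trans ?_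
    have h1 : v' i = v i - w := by simp [hv']
    have h2 : v' j = v j := by simp [hv', hij.symm]
    rw [h1, h2]
    linarith
  have hball : b + ζ + ((1 - s) / s) • v' ∈ Ω := by
    refine hb ?_
    rw [mem_closedBall, dist_eq_norm, add_assoc, add_sub_cancel_left]
    refine (norm_add_le _ _).trans ?_
    rw [norm_smul, Real.norm_eq_abs, abs_of_nonneg (div_nonneg (by linarith) hs0.le)]
    have : (1 - s) / s * ‖v'‖ ≤ r / 2 := by
      rw [div_mul_eq_mul_div, div_le_iff₀ hs0]
      nlinarith [norm_nonneg v']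
    linarith
  convert hconv hseg hball (by linarith : 0 ≤ 1 - s) hs0.le (by ring) using 1
  rw [smul_add s, smul_smul, mul_div_cancel₀ _ hs0.ne', hv']
  module

theorem notMem_of_isSamplingSet {Ω : Set E} (hconv : Convex ℝ Ω) (h_int : (interior Ω).Nonempty)
    {Q : Set ℝ} (hQpos : Q ⊆ Set.Ioi 0) (hQ : UniformlyDiscrete Q) {i j : Fin 2} (hij : i ≠ j)
    (hS : IsSamplingSet Ω {p : E | ‖(WithLp.ofLp p : Fin 2 → ℝ)‖ ∈ Q}) :
    lowerUniformDensity (Q ∪ -Q) • EuclideanSpace.single i (1 : ℝ) ∉ Ω - Ω := by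
  rintro ⟨α', hα', α, hα, hαα⟩
  set d := lowerUniformDensity (Q ∪ -Q) with hd
  have hd0 : 0 ≤ d := by
    obtain ⟨δ, hδ, h, -⟩ := exists_separation_symm hQpos hQ
    exact lowerUniformDensity_nonneg ⟨δ, hδ, h⟩
  have hα'' : α + d • EuclideanSpace.single i (1 : ℝ) ∈ Ω := by
    rw [← hαα]
    simpa using hα'
  obtain ⟨b, hb⟩ := h_int
  obtain ⟨r, hr, hbr⟩ := nhds_basis_closedBall.mem_iff.1 (mem_interior_iff_mem_nhds.1 hb)
  obtain ⟨C, hC, hsamp⟩ := hS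
  obtain ⟨L, hL0, hL⟩ := exists_lipschitz (isCompact_closedBall (0 : E) (d + 2))
  set A := max L (8 / r) with hA
  have hA0 : 0 < A := lt_max_of_lt_right (by positivity)
  obtain ⟨N, hN⟩ := exists_nat_ge (48 * A * C + 1)
  have hN0 : 0 < (N : ℝ) := lt_of_lt_of_le (by positivity) hN
  set ρ := min 1 ((1 / 2 ^ N) * r / 2) with hρ
  have hρ0 : 0 < ρ := lt_min one_pos (by positivity)
  obtain ⟨f, M, hM0, hfM, ⟨y, hy⟩, hftrig, hfP⟩ := exists_small_on_squares hQpos hQ hij hρ0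
    (show 0 < 1 / (8 * C) by positivity)
  rw [← hd] at hftrig
  obtain ⟨H, hH, hH0, hH1, hHd⟩ := exists_bump hij hr
  have hflip : ∀ x z, ‖f x - f z‖ ≤ L * M * ‖x - z‖ := by
    refine hL f (hftrig.mono fun ξ hξ => ?_).memBernstein M hfM
    rw [mem_closedBall_zero_iff]
    have h1 := norm_le_abs_add_abs hij ξ
    have h2 : ρ ≤ 1 := min_le_left _ _
    linarith [hξ.1, hξ.2]
  set m := α + (d / 2) • EuclideanSpace.single i (1 : ℝ) with hm
  set k : ℕ → E → ℂ := fun l x =>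
    character ((1 - 1 / 2 ^ (l + 1) : ℝ) • m + (1 / 2 ^ (l + 1) : ℝ) • b) ((1 : ℝ) • x + (-y)) *
      (f ((1 - 1 / 2 ^ (l + 1) : ℝ) • x + (1 / 2 ^ (l + 1) : ℝ) • y) *
        H ((1 / 2 ^ (l + 1) : ℝ) • x + (-(1 / 2 ^ (l + 1)) : ℝ) • y)) with hk
  have hktrig : ∀ l ∈ Finset.range N, IsTrigLimit Ω (k l) := by
    intro l hl
    rw [Finset.mem_range] at hl
    set s : ℝ := 1 / 2 ^ (l + 1) with hs
    have hs0 : 0 < s := by positivity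
    have hs1 : s ≤ 1 := by
      rw [hs, div_le_one (by positivity)]
      exact one_le_pow₀ one_le_two
    have hρs : ρ ≤ s * r / 2 := by
      refine (min_le_right _ _).trans ?_
      rw [hs]
      gcongr
      · exact one_le_two
      · exact hl
    refine (((IsTrigLimit.of_character (Set.mem_singleton _)).comp_affine 1 (-y)).mul
      ((hftrig.comp_affine (1 - s) (s • y)).mul (hH.comp_affine s ((-s) • y)))).mono ?_
    rintro _ ⟨_, ⟨_, rfl, rfl⟩, _, ⟨_, ⟨v, hv, rfl⟩, _, ⟨ζ, hζ, rfl⟩, rfl⟩, rfl⟩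
    have := mem_of_convex_combination hconv hij hd0 hα hα'' hbr hρ0.le hs0 hs1 hρs hv.1 hv.2
      (mem_closedBall_zero_iff.1 hζ)
    simpa [hm, hs, add_assoc] using this
  set F : E → ℂ := fun x => (1 / N : ℂ) * ∑ l ∈ Finset.range N, k l x with hF
  have hFB : MemBernstein Ω F := ((IsTrigLimit.sum _ hktrig).const_mul _).memBernstein
  have hky : ∀ l, k l y = f y := by
    intro l
    simp only [hk]
    rw [one_smul, add_neg_cancel, character_zero_right, ← add_smul, sub_add_cancel, one_smul,
      neg_smul, add_neg_cancel, hH0, one_mul, mul_one]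
  have hFy : F y = f y := by
    have : (N : ℂ) ≠ 0 := by exact_mod_cast hN0.ne'
    simp only [hF, hky, Finset.sum_const, Finset.card_range, nsmul_eq_mul]
    field_simp
  have hterm : ∀ p : E, ‖(WithLp.ofLp p : Fin 2 → ℝ)‖ ∈ Q → ∀ l,
      ‖k l p‖ ≤ M / (8 * C) + M * (6 * A * ((‖p - y‖ / 2 ^ (l + 1)) /
        ((1 + 2 * (‖p - y‖ / 2 ^ (l + 1))) * (1 + ‖p - y‖ / 2 ^ (l + 1))))) := by
    intro p hp l
    set s : ℝ := 1 / 2 ^ (l + 1) with hs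
    have hs0 : 0 < s := by positivity
    set t := ‖p - y‖ / 2 ^ (l + 1) with ht
    have ht0 : 0 ≤ t := by positivity
    have hts : t = s * ‖p - y‖ := by rw [ht, hs]; ring
    set z := (1 - s) • p + s • y with hz
    have hpz : ‖z - p‖ = t := by
      rw [hz, show (1 - s) • p + s • y - p = (-s) • (p - y) by module, norm_smul, norm_neg,
        Real.norm_eq_abs, abs_of_pos hs0, hts]
    have hHarg : s • p + (-s) • y = s • (p - y) := by module
    set h := ‖H (s • (p - y))‖ with hh
    have hh0 : 0 ≤ h := norm_nonneg _
    have hh1 : h ≤ 1 := hH1 _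
    have hht : h * t ≤ 4 / r := by
      have := hHd (s • (p - y))
      rwa [norm_smul, Real.norm_eq_abs, abs_of_pos hs0, ← hts] at this
    have hkn : ‖k l p‖ = ‖f z‖ * h := by
      simp only [hk]
      rw [norm_mul, norm_mul, norm_character, one_mul, ← hs, hHarg]
    have hdiff : ‖f z - f p‖ ≤ L * M * t := hpz ▸ hflip z p
    have hdiff2 : ‖f z - f p‖ ≤ 2 * M := (norm_sub_le _ _).trans (by linarith [hfM z, hfM p])
    have hfz : ‖f z‖ ≤ ‖f p‖ + ‖f z - f p‖ := by
      have := norm_add_le (f p) (f z - f p)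
      rwa [add_sub_cancel] at this
    have hfp : ‖f p‖ ≤ M / (8 * C) := (hfP p hp).trans (le_of_eq (by ring))
    have hLA : L ≤ A := le_max_left _ _
    have hrA : 2 * (4 / r) ≤ A := le_trans (le_of_eq (by ring)) (le_max_right L (8 / r))
    have hq : ‖f z - f p‖ / M * h ≤ 6 * A * (t / ((1 + 2 * t) * (1 + t))) := by
      refine le_six_mul_div ht0 ?_ ?_
      · calc ‖f z - f p‖ / M * h ≤ ‖f z - f p‖ / M * 1 := by gcongr
          _ ≤ L * t := by
            rw [mul_one, div_le_iff₀ hM0]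
            linarith
          _ ≤ A * t := by gcongr
      · calc ‖f z - f p‖ / M * h * t = ‖f z - f p‖ / M * (h * t) := by ring
          _ ≤ 2 * (4 / r) := by
            gcongr
            rwa [div_le_iff₀ hM0]
          _ ≤ A := hrA
    rw [hkn]
    calc ‖f z‖ * h ≤ (‖f p‖ + ‖f z - f p‖) * h := by gcongr
      _ = ‖f p‖ * h + M * (‖f z - f p‖ / M * h) := by field_simp
      _ ≤ M / (8 * C) * 1 + M * (6 * A * (t / ((1 + 2 * t) * (1 + t)))) := by gcongr
      _ = _ := by rw [mul_one]
  have hFP : ∀ p : E, ‖(WithLp.ofLp p : Fin 2 → ℝ)‖ ∈ Q → ‖F p‖ ≤ M / (4 * C) := by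
    intro p hp
    have h1 : ‖∑ l ∈ Finset.range N, k l p‖ ≤ N * (M / (8 * C)) + M * (6 * A) := by
      refine (norm_sum_le_of_le _ fun l _ => hterm p hp l).trans ?_
      rw [Finset.sum_add_distrib, Finset.sum_const, Finset.card_range, nsmul_eq_mul,
        ← Finset.mul_sum, ← Finset.mul_sum]
      have := sum_dyadic_le ‖p - y‖ (norm_nonneg _) N
      exact add_le_add le_rfl (mul_le_mul_of_nonneg_left
        (mul_le_of_le_one_right (by positivity) this) hM0.le)
    have h2 : M * (6 * A) ≤ N * (M / (8 * C)) := by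
      rw [← mul_div_assoc, le_div_iff₀ (by positivity)]
      nlinarith
    simp only [hF]
    rw [norm_mul, norm_div, norm_one, Complex.norm_natCast, one_div, inv_mul_le_iff₀ hN0]
    refine (h1.trans (add_le_add_right h2 _)).trans (le_of_eq ?_)
    field_simp
    norm_num
  have hsup : sSup ((fun p => ‖F p‖) '' {p : E | ‖(WithLp.ofLp p : Fin 2 → ℝ)‖ ∈ Q}) ≤
      M / (4 * C) := by
    refine Real.sSup_le ?_ (by positivity)
    rintro _ ⟨p, hp, rfl⟩
    exact hFP p hp
  have h1 := (hsamp F hFB y).trans (mul_le_mul_of_nonneg_left hsup hC.le)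
  rw [hFy, show C * (M / (4 * C)) = M / 4 by field_simp] at h1
  linarith

end Plane

theorem interior_nonempty_of_volume_pos {Ω : Set V} (hconv : Convex ℝ Ω) (hΩ : 0 < volume Ω) :
    (interior Ω).Nonempty := by
  rw [Set.nonempty_iff_ne_empty]
  intro h
  refine hΩ.ne' (measure_mono_null ?_ (hconv.addHaar_frontier volume))
  rw [frontier, h, Set.sdiff_empty]
  exact subset_closure

/-- Corollary (ii), squares: for `D = [−1,1]²`, `P = Q·∂D` is a sampling set for `B_Ω`
iff `(d⁻(Q), 0) ∉ Ω − Ω` and `(0, d⁻(Q)) ∉ Ω − Ω`. -/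
theorem dilated_squares_sampling
    (Ω : Set (EuclideanSpace ℝ (Fin 2))) (hΩcompact : IsCompact Ω) (hΩconvex : Convex ℝ Ω)
    (hΩpos : 0 < volume Ω)
    (D : Set (EuclideanSpace ℝ (Fin 2))) (hD : D = {x | ∀ i, x i ∈ Set.Icc (-1 : ℝ) 1})
    (Q : Set ℝ) (hQpos : Q ⊆ Set.Ioi 0) (hQud : UniformlyDiscrete Q)
    (P : Set (EuclideanSpace ℝ (Fin 2))) (hP : P = {x | ∃ q ∈ Q, ∃ w ∈ frontier D, x = q • w}) :
    IsSamplingSet Ω P ↔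
      ((WithLp.equiv 2 (Fin 2 → ℝ)).symm ![lowerUniformDensity (Q ∪ -Q), 0] ∉ Ω - Ω ∧
        (WithLp.equiv 2 (Fin 2 → ℝ)).symm ![0, lowerUniformDensity (Q ∪ -Q)] ∉ Ω - Ω) := by
  have h_int := interior_nonempty_of_volume_pos hΩconvex hΩpos
  have hP' : P = {p | ‖(WithLp.ofLp p : Fin 2 → ℝ)‖ ∈ Q} := by
    rw [hP, hD]
    exact Set.ext fun x => mem_dilated_frontier_iff hQpos x
  have h0 : (WithLp.equiv 2 (Fin 2 → ℝ)).symm ![lowerUniformDensity (Q ∪ -Q), 0] =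
      lowerUniformDensity (Q ∪ -Q) • EuclideanSpace.single 0 (1 : ℝ) := by
    ext k
    fin_cases k <;> simp
  have h1 : (WithLp.equiv 2 (Fin 2 → ℝ)).symm ![0, lowerUniformDensity (Q ∪ -Q)] =
      lowerUniformDensity (Q ∪ -Q) • EuclideanSpace.single 1 (1 : ℝ) := by
    ext k
    fin_cases k <;> simp
  rw [hP', h0, h1]
  refine ⟨fun hS => ⟨notMem_of_isSamplingSet hΩconvex h_int hQpos hQud zero_ne_one hS,
    notMem_of_isSamplingSet hΩconvex h_int hQpos hQud one_ne_zero hS⟩, fun h => ?_⟩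
  exact isSamplingSet_of_notMem hΩcompact hΩconvex (h_int.mono interior_subset) hQpos hQud
    (Fin.forall_fin_two.2 h)
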